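/- arXiv:math/0610820 — 2 statements merged into one kernel-verified Lean document; each statement's English description precedes it below -/
import Mathlib

section
/- No solenoid can be embedded into a surface. That is, for any sequence of integers w₁, w₂, … with each wₙ > 1, there is no topological embedding of the solenoid Θ of type (w₁, w₂, …) into any surface F. -/
open Topology

/-- The solenoid of type `(w 0, w 1, …)` (denoted `(w₁, w₂, …)` in the paper),
as a subgroup of the product of countably many circles:
`{(x₀, x₁, …) : xₙ₋₁ = xₙ ^ wₙ for all n ≥ 1}`. -/
noncomputable def solenoidSubgroup (w : ℕ → ℕ) : Subgroup (ℕ → Circle) where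
  carrier := {x | ∀ n, x n = x (n + 1) ^ w n}
  one_mem' := by intro n; simp
  mul_mem' := by intro a b ha hb n; simp only [Pi.mul_apply, ha n, hb n, mul_pow]
  inv_mem' := by intro a ha n; simp only [Pi.inv_apply, ha n, inv_pow]

/-- The solenoid as a topological space, with the subspace topology from the
product topology. -/
noncomputable abbrev Solenoid (w : ℕ → ℕ) : Type :=
  ↥(solenoidSubgroup w)

/-- A surface: a nonempty Hausdorff, second-countable space in which every point
has an open neighborhood homeomorphic to an open subset of ℝ². -/
def IsSurface (F : Type*) [TopologicalSpace F] : Prop :=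
  Nonempty F ∧ T2Space F ∧ SecondCountableTopology F ∧
    ∀ x : F, ∃ (U : Set F) (V : Set (EuclideanSpace ℝ (Fin 2))),
      IsOpen U ∧ x ∈ U ∧ IsOpen V ∧ Nonempty (↥U ≃ₜ ↥V)

namespace SolenoidAux

open Topology Set Filter

/-- `ℓ` is a continuous logarithm of `δ v - γ u` on the square `[0,d]²`. -/
def IsLift (γ δ : ℝ → ℂ) (d : ℝ) (l : ℝ × ℝ → ℂ) : Prop :=
  ContinuousOn l (Icc 0 d ×ˢ Icc 0 d) ∧
    ∀ u ∈ Icc 0 d, ∀ v ∈ Icc 0 d, Complex.exp (l (u, v)) = δ v - γ u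

/-- two curves are disjoint on `[0,d]`. -/
def Disj (γ δ : ℝ → ℂ) (d : ℝ) : Prop :=
  ∀ u ∈ Icc 0 d, ∀ v ∈ Icc 0 d, γ u ≠ δ v

lemma Disj.symm {γ δ : ℝ → ℂ} {d : ℝ} (h : Disj γ δ d) : Disj δ γ d :=
  fun u hu v hv e => h v hv u hu e.symm

lemma exists_log {X : Type*} [TopologicalSpace X] [SimplyConnectedSpace X]
    [LocallyPathConnectedSpace X] (g : X → ℂ) (hg : Continuous g) (h0 : ∀ x, g x ≠ 0) :
    ∃ l : X → ℂ, Continuous l ∧ ∀ x, Complex.exp (l x) = g x := by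
  obtain ⟨x0⟩ : Nonempty X := inferInstance
  obtain ⟨F, ⟨-, hF⟩, -⟩ := Complex.isCoveringMapOn_exp.existsUnique_continuousMap_lifts
    ⟨g, hg⟩ (a₀ := x0) (Complex.exp_log (h0 x0)) (fun x => h0 x)
  exact ⟨F, F.continuous, fun x => congrFun hF x⟩

lemma exists_lift {γ δ : ℝ → ℂ} {d : ℝ} (hd : 0 ≤ d) (hγ : ContinuousOn γ (Icc 0 d))
    (hδ : ContinuousOn δ (Icc 0 d)) (h : Disj γ δ d) : ∃ l, IsLift γ δ d l := by
  have c1 : Continuous (IccExtend hd (domRestrict (Icc 0 d) γ)) :=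
    Continuous.Icc_extend' (continuousOn_iff_continuous_domRestrict.mp hγ)
  have c2 : Continuous (IccExtend hd (domRestrict (Icc 0 d) δ)) :=
    Continuous.Icc_extend' (continuousOn_iff_continuous_domRestrict.mp hδ)
  obtain ⟨l, hl, hl'⟩ := exists_log (X := ℝ × ℝ)
    (fun p => IccExtend hd (domRestrict (Icc 0 d) δ) p.2 - IccExtend hd (domRestrict (Icc 0 d) γ) p.1)
    (by fun_prop)
    (by
      intro p
      rw [sub_ne_zero]
      exact (h _ (projIcc 0 d hd p.1).2 _ (projIcc 0 d hd p.2).2).symm)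
  refine ⟨l, hl.continuousOn, fun u hu v hv => ?_⟩
  rw [hl', IccExtend_of_mem hd _ hu, IccExtend_of_mem hd _ hv]
  rfl

lemma const_of_exp {X : Type*} [TopologicalSpace X] {S : Set X} (hS : IsPreconnected S)
    {D : X → ℂ} (hD : ContinuousOn D S) {k : ℂ} (h : ∀ x ∈ S, Complex.exp (D x) = k) {x y : X}
    (hx : x ∈ S) (hy : y ∈ S) : D x = D y := by
  have hc : ContinuousOn (fun z => (D z - D y).im / (2 * Real.pi)) S := by fun_prop
  have hintg : ∀ z ∈ S, ∃ n : ℤ, D z = D y + n * (2 * Real.pi * Complex.I) := by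
    intro z hz
    exact Complex.exp_eq_exp_iff_exists_int.mp ((h z hz).trans (h y hy).symm)
  have hmaps : MapsTo (fun z => (D z - D y).im / (2 * Real.pi)) S (range ((↑) : ℤ → ℝ)) := by
    intro z hz
    obtain ⟨n, hn⟩ := hintg z hz
    refine ⟨n, ?_⟩
    have : (2 * Real.pi) ≠ 0 := by positivity
    simp only [hn]
    field_simp
    simp
  have := hS.constant_of_mapsTo (T := range ((↑) : ℤ → ℝ))
    (by
      rw [← image_univ]
      exact (isDiscrete_univ_iff.mpr inferInstance).image Int.isClosedEmbedding_coe_real.isInducing)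
    hc hmaps hx hy
  simp only [sub_self, Complex.zero_im, zero_div] at this
  obtain ⟨n, hn⟩ := hintg x hx
  have hpi : (2 * Real.pi) ≠ 0 := by positivity
  rw [hn] at this ⊢
  have h3 : (n : ℝ) = 0 := by
    field_simp at this
    simpa using this
  have : n = 0 := by exact_mod_cast h3
  simp [this]

lemma square_preconnected (d : ℝ) : IsPreconnected (Icc (0 : ℝ) d ×ˢ Icc (0 : ℝ) d) :=
  isPreconnected_Icc.prod isPreconnected_Icc

open Classical in
/-- total change of argument of `δ v - γ u` from `(0,d)` to `(d,0)`. -/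
noncomputable def ang (γ δ : ℝ → ℂ) (d : ℝ) : ℝ :=
  if h : ∃ l, IsLift γ δ d l then (h.choose (d, 0) - h.choose (0, d)).im else 0

lemma ang_eq {γ δ : ℝ → ℂ} {d : ℝ} (hd : 0 ≤ d) {l : ℝ × ℝ → ℂ} (hl : IsLift γ δ d l) :
    ang γ δ d = (l (d, 0) - l (0, d)).im := by
  have h : ∃ l, IsLift γ δ d l := ⟨l, hl⟩
  rw [ang, dif_pos h]
  have h2 := h.choose_spec
  set m := h.choose
  have : m (d, 0) - l (d, 0) = m (0, d) - l (0, d) := by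
    refine const_of_exp (square_preconnected d) (D := fun p => m p - l p) (k := 1)
      (h2.1.sub hl.1) ?_ ?_ ?_
    · rintro ⟨u, v⟩ ⟨hu, hv⟩
      have e1 := h2.2 u hu v hv
      have e2 := hl.2 u hu v hv
      rw [Complex.exp_sub, e1, ← e2, div_self (Complex.exp_ne_zero _)]
    · exact ⟨right_mem_Icc.mpr hd, left_mem_Icc.mpr hd⟩
    · exact ⟨left_mem_Icc.mpr hd, right_mem_Icc.mpr hd⟩
  have : m (d, 0) - m (0, d) = l (d, 0) - l (0, d) := by linear_combination this
  rw [this]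

lemma IsLift.swap {γ δ : ℝ → ℂ} {d : ℝ} {l : ℝ × ℝ → ℂ} (hl : IsLift γ δ d l) :
    IsLift δ γ d (fun p => l p.swap + Real.pi * Complex.I) := by
  refine ⟨?_, ?_⟩
  · refine ContinuousOn.add (hl.1.comp continuous_swap.continuousOn ?_) continuousOn_const
    rintro ⟨u, v⟩ ⟨hu, hv⟩
    exact ⟨hv, hu⟩
  · intro u hu v hv
    have := hl.2 v hv u hu
    simp only [Prod.swap_prod_mk]
    rw [Complex.exp_add, this, Complex.exp_pi_mul_I]
    ring

lemma ang_swap {γ δ : ℝ → ℂ} {d : ℝ} (hd : 0 ≤ d) {l : ℝ × ℝ → ℂ} (hl : IsLift γ δ d l) :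
    ang δ γ d = - ang γ δ d := by
  rw [ang_eq hd hl, ang_eq hd hl.swap]
  simp

lemma IsLift.mono {γ δ : ℝ → ℂ} {d d' : ℝ} {l : ℝ × ℝ → ℂ} (hl : IsLift γ δ d l) (h : d' ≤ d) :
    IsLift γ δ d' l := by
  have hs : Icc 0 d' ⊆ Icc 0 d := Icc_subset_Icc_right h
  exact ⟨hl.1.mono (prod_mono hs hs), fun u hu v hv => hl.2 u (hs hu) v (hs hv)⟩

lemma IsLift.congr {γ δ γ' δ' : ℝ → ℂ} {d : ℝ} {l : ℝ × ℝ → ℂ} (hl : IsLift γ δ d l)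
    (h1 : EqOn γ' γ (Icc 0 d)) (h2 : EqOn δ' δ (Icc 0 d)) : IsLift γ' δ' d l :=
  ⟨hl.1, fun u hu v hv => by rw [hl.2 u hu v hv, h1 hu, h2 hv]⟩

/-- if the two exponentials are close to opposite, the imaginary parts differ. -/
lemma im_sub_ne_zero {a b : ℂ} (h : ‖Complex.exp a + Complex.exp b‖ < ‖Complex.exp b‖) :
    (a - b).im ≠ 0 := by
  intro h0
  have e : Complex.exp a = (Real.exp (a - b).re : ℂ) * Complex.exp b := by
    have : a = ((a - b).re : ℂ) + b := by
      apply Complex.ext <;> simp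
      simpa [sub_eq_zero] using h0
    conv_lhs => rw [this]
    rw [Complex.exp_add, Complex.ofReal_exp]
  have : Complex.exp a + Complex.exp b = ((Real.exp (a - b).re + 1 : ℝ) : ℂ) * Complex.exp b := by
    rw [e]; push_cast; ring
  rw [this, norm_mul, Complex.norm_real, Real.norm_of_nonneg (by positivity)] at h
  have h1 : 0 < ‖Complex.exp b‖ := by simp
  have h2 : 0 < Real.exp (a - b).re := Real.exp_pos _
  nlinarith

/-- general path lemma. -/
lemma path_sign {γ δ : ℝ → ℂ} {d : ℝ} {l : ℝ × ℝ → ℂ} (hl : IsLift γ δ d l)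
    {a b : ℝ} (hab : a ≤ b) {s t s' t' : ℝ → ℝ}
    (hs : ContinuousOn s (Icc a b)) (ht : ContinuousOn t (Icc a b))
    (hs' : ContinuousOn s' (Icc a b)) (ht' : ContinuousOn t' (Icc a b))
    (ms : MapsTo s (Icc a b) (Icc 0 d)) (mt : MapsTo t (Icc a b) (Icc 0 d))
    (ms' : MapsTo s' (Icc a b) (Icc 0 d)) (mt' : MapsTo t' (Icc a b) (Icc 0 d))
    (h : ∀ x ∈ Icc a b,
      ‖(δ (s' x) - γ (s x)) + (δ (t' x) - γ (t x))‖ < ‖δ (t' x) - γ (s x)‖) :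
    (0 < (l (t a, s' a) - l (s a, t' a)).im ↔ 0 < (l (t b, s' b) - l (s b, t' b)).im) := by
  set B : ℝ → ℝ := fun x => (l (t x, s' x) - l (s x, t' x)).im with hB
  have hBc : ContinuousOn B (Icc a b) := by
    have c1 : ContinuousOn (fun x => l (t x, s' x)) (Icc a b) :=
      hl.1.comp (ht.prodMk hs') (fun x hx => ⟨mt hx, ms' hx⟩)
    have c2 : ContinuousOn (fun x => l (s x, t' x)) (Icc a b) :=
      hl.1.comp (hs.prodMk ht') (fun x hx => ⟨ms hx, mt' hx⟩)
    exact Complex.continuous_im.comp_continuousOn (c1.sub c2)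
  have hne : ∀ x ∈ Icc a b, B x ≠ 0 := by
    intro x hx
    apply im_sub_ne_zero
    rw [hl.2 _ (mt hx) _ (ms' hx), hl.2 _ (ms hx) _ (mt' hx)]
    convert h x hx using 2
    ring
  change 0 < B a ↔ 0 < B b
  have ha : a ∈ Icc a b := left_mem_Icc.mpr hab
  have hb : b ∈ Icc a b := right_mem_Icc.mpr hab
  constructor
  · intro h1
    by_contra h2
    have := intermediate_value_Icc' hab hBc (show (0:ℝ) ∈ Icc (B b) (B a) from ⟨by linarith, h1.le⟩)
    obtain ⟨x, hx, hx0⟩ := this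
    exact hne x hx hx0
  · intro h1
    by_contra h2
    have := intermediate_value_Icc hab hBc (show (0:ℝ) ∈ Icc (B a) (B b) from ⟨by linarith, h1.le⟩)
    obtain ⟨x, hx, hx0⟩ := this
    exact hne x hx hx0

lemma ang_ne_zero {γ δ : ℝ → ℂ} {d : ℝ} (hd : 0 ≤ d) {l : ℝ × ℝ → ℂ} (hl : IsLift γ δ d l)
    (h : ‖(δ 0 - γ 0) + (δ d - γ d)‖ < ‖δ d - γ 0‖) : ang γ δ d ≠ 0 := by
  rw [ang_eq hd hl]
  apply im_sub_ne_zero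
  have m0 : (0:ℝ) ∈ Icc 0 d := left_mem_Icc.mpr hd
  have md : d ∈ Icc 0 d := right_mem_Icc.mpr hd
  rw [hl.2 _ md _ m0, hl.2 _ m0 _ md]
  convert h using 2
  ring

lemma ang_shrink {γ δ : ℝ → ℂ} {d d' : ℝ} (hd' : 0 ≤ d') (hdd : d' ≤ d) {l : ℝ × ℝ → ℂ}
    (hl : IsLift γ δ d l)
    (h : ∀ t ∈ Icc d' d, ‖(δ 0 - γ 0) + (δ t - γ t)‖ < ‖δ t - γ 0‖) :
    0 < ang γ δ d' ↔ 0 < ang γ δ d := by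
  rw [ang_eq (hd'.trans hdd) hl, ang_eq hd' (hl.mono hdd)]
  have m0 : (0:ℝ) ∈ Icc 0 d := left_mem_Icc.mpr (hd'.trans hdd)
  have mm : MapsTo (fun x : ℝ => x) (Icc d' d) (Icc 0 d) := fun x hx => ⟨hd'.trans hx.1, hx.2⟩
  exact path_sign hl hdd (s := fun _ => 0) (s' := fun _ => 0) (t := fun x => x) (t' := fun x => x)
    continuousOn_const continuousOn_id continuousOn_const continuousOn_id
    (fun _ _ => m0) mm (fun _ _ => m0) mm h

/-- stability of the sign. -/
lemma ang_stable {γ δ : ℝ → ℂ} {d : ℝ} (hd : 0 ≤ d) (hγ : ContinuousOn γ (Icc 0 d))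
    (hδ : ContinuousOn δ (Icc 0 d)) (hdisj : Disj γ δ d) (h0 : ang γ δ d ≠ 0) :
    ∃ ρ > 0, ∀ γ' δ' : ℝ → ℂ, ContinuousOn γ' (Icc 0 d) → ContinuousOn δ' (Icc 0 d) →
      (∀ u ∈ Icc 0 d, ‖γ' u - γ u‖ < ρ) → (∀ u ∈ Icc 0 d, ‖δ' u - δ u‖ < ρ) →
      (0 < ang γ' δ' d ↔ 0 < ang γ δ d) := by
  obtain ⟨l, hl⟩ := exists_lift hd hγ hδ hdisj
  have m0 : (0:ℝ) ∈ Icc 0 d := left_mem_Icc.mpr hd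
  have md : d ∈ Icc 0 d := right_mem_Icc.mpr hd
  -- lower bound
  obtain ⟨μ, hμ, hμ'⟩ : ∃ μ > 0, ∀ u ∈ Icc 0 d, ∀ v ∈ Icc 0 d, μ ≤ ‖δ v - γ u‖ := by
    have hc : ContinuousOn (fun p : ℝ × ℝ => ‖δ p.2 - γ p.1‖) (Icc 0 d ×ˢ Icc 0 d) := by
      refine ContinuousOn.norm (ContinuousOn.sub ?_ ?_)
      · exact hδ.comp continuousOn_snd (fun p hp => hp.2)
      · exact hγ.comp continuousOn_fst (fun p hp => hp.1)
    obtain ⟨p, hp, hmin⟩ := (isCompact_Icc.prod isCompact_Icc).exists_isMinOn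
      ⟨((0:ℝ),(0:ℝ)), m0, m0⟩ hc
    refine ⟨‖δ p.2 - γ p.1‖, ?_, fun u hu v hv => hmin (show (u, v) ∈ _ from ⟨hu, hv⟩)⟩
    rw [gt_iff_lt, norm_pos_iff, sub_ne_zero]
    exact (hdisj _ hp.1 _ hp.2).symm
  -- continuity of arg at 1
  obtain ⟨η, hη, hη'⟩ : ∃ η > 0, ∀ z : ℂ, ‖z - 1‖ < η →
      z ∈ Complex.slitPlane ∧ |(Complex.log z).im| < |ang γ δ d| / 2 := by
    have hc : ContinuousAt (fun z => (Complex.log z).im) 1 :=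
      Complex.continuous_im.continuousAt.comp (continuousAt_clog (by simp))
    have e1 : ∀ᶠ z in 𝓝 (1:ℂ), |(Complex.log z).im| < |ang γ δ d| / 2 := by
      have := hc.abs.tendsto.eventually (eventually_lt_nhds (b := |ang γ δ d| / 2)
        (by simpa using h0))
      exact this
    have e2 : ∀ᶠ z in 𝓝 (1:ℂ), z ∈ Complex.slitPlane :=
      Complex.isOpen_slitPlane.mem_nhds (by simp)
    obtain ⟨η, hη, h⟩ := Metric.eventually_nhds_iff.mp (e2.and e1)
    exact ⟨η, hη, fun z hz => h (by rwa [dist_eq_norm])⟩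
  refine ⟨η * μ / 2, by positivity, fun γ' δ' hγ' hδ' h1 h2 => ?_⟩
  have hne : ∀ u ∈ Icc 0 d, ∀ v ∈ Icc 0 d, δ v - γ u ≠ 0 := by
    intro u hu v hv
    rw [sub_ne_zero]
    exact (hdisj _ hu _ hv).symm
  have hratio : ∀ u ∈ Icc 0 d, ∀ v ∈ Icc 0 d, ‖(δ' v - γ' u) / (δ v - γ u) - 1‖ < η := by
    intro u hu v hv
    have hn := hne u hu v hv
    have hpos : 0 < ‖δ v - γ u‖ := norm_pos_iff.mpr hn
    rw [show (δ' v - γ' u) / (δ v - γ u) - 1 = ((δ' v - δ v) - (γ' u - γ u)) / (δ v - γ u) by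
      field_simp; ring, norm_div, div_lt_iff₀ hpos]
    calc _ ≤ ‖δ' v - δ v‖ + ‖γ' u - γ u‖ := norm_sub_le _ _
      _ < η * μ / 2 + η * μ / 2 := add_lt_add (h2 v hv) (h1 u hu)
      _ = η * μ := by ring
      _ ≤ _ := by gcongr; exact hμ' u hu v hv
  have hl' : IsLift γ' δ' d
      (fun p => l p + Complex.log ((δ' p.2 - γ' p.1) / (δ p.2 - γ p.1))) := by
    constructor
    · refine hl.1.add (ContinuousOn.clog (ContinuousOn.div (ContinuousOn.sub ?_ ?_) (ContinuousOn.sub ?_ ?_) ?_) ?_)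
      · exact hδ'.comp continuousOn_snd (fun p hp => hp.2)
      · exact hγ'.comp continuousOn_fst (fun p hp => hp.1)
      · exact hδ.comp continuousOn_snd (fun p hp => hp.2)
      · exact hγ.comp continuousOn_fst (fun p hp => hp.1)
      · exact fun p hp => hne _ hp.1 _ hp.2
      · exact fun p hp => (hη' _ (hratio _ hp.1 _ hp.2)).1
    · intro u hu v hv
      have hs := (hη' _ (hratio _ hu _ hv)).1
      rw [Complex.exp_add, hl.2 u hu v hv, Complex.exp_log (Complex.slitPlane_ne_zero hs)]
      exact mul_div_cancel₀ _ (hne u hu v hv)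
  have b1 := (hη' _ (hratio _ md _ m0)).2
  have b2 := (hη' _ (hratio _ m0 _ md)).2
  have e1 := ang_eq hd hl'
  have e2 := ang_eq hd hl
  simp only [Complex.sub_im, Complex.add_im] at e1 e2
  set A := ang γ δ d
  set A' := ang γ' δ' d
  rw [abs_lt] at b1 b2
  rcases lt_or_gt_of_ne h0 with hA | hA
  · rw [abs_of_neg hA] at b1 b2
    constructor <;> intro <;> linarith
  · rw [abs_of_pos hA] at b1 b2
    constructor <;> intro <;> linarith

lemma im_log_change {c l : ℝ → ℂ} {a b : ℝ} (hab : a ≤ b) (hc : ContinuousOn c (Icc a b))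
    (hl : ContinuousOn l (Icc a b)) (hs : ∀ u ∈ Icc a b, c u ∈ Complex.slitPlane) {k : ℂ}
    (hk : ∀ u ∈ Icc a b, Complex.exp (l u) = k * c u) :
    (l b).im - (l a).im = (c b).arg - (c a).arg := by
  have := const_of_exp (S := Icc a b) isPreconnected_Icc (D := fun u => l u - Complex.log (c u))
    (k := k) (hl.sub (hc.clog hs)) (by
      intro u hu
      have h0 := Complex.slitPlane_ne_zero (hs u hu)
      rw [Complex.exp_sub, hk u hu, Complex.exp_log h0, mul_div_assoc, div_self h0, mul_one])
    (right_mem_Icc.mpr hab) (left_mem_Icc.mpr hab)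
  have := congrArg Complex.im this
  simp only [Complex.sub_im, Complex.log_im] at this
  linarith

/-- last time that `g ≤ b`. -/
noncomputable def lastTime (g : ℝ → ℝ) (d b : ℝ) : ℝ := sSup {u | u ∈ Icc 0 d ∧ g u ≤ b}

lemma lastTime_mem {g : ℝ → ℝ} {d b : ℝ} (hd : 0 ≤ d) (hg : ContinuousOn g (Icc 0 d))
    (h0 : ∃ u ∈ Icc 0 d, g u ≤ b) :
    lastTime g d b ∈ Icc 0 d ∧ g (lastTime g d b) ≤ b := by
  have hcl : IsClosed {u | u ∈ Icc 0 d ∧ g u ≤ b} :=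
    hg.preimage_isClosed_of_isClosed isClosed_Icc isClosed_Iic
  have hcomp : IsCompact {u | u ∈ Icc 0 d ∧ g u ≤ b} :=
    isCompact_Icc.of_isClosed_subset hcl (fun u hu => hu.1)
  exact hcomp.sSup_mem (by obtain ⟨u, hu, hu'⟩ := h0; exact ⟨u, hu, hu'⟩)

lemma le_lastTime {g : ℝ → ℝ} {d b u : ℝ} (hu : u ∈ Icc 0 d) (h : g u ≤ b) :
    u ≤ lastTime g d b :=
  le_csSup ⟨d, fun v hv => hv.1.2⟩ ⟨hu, h⟩

lemma lastTime_eq {g : ℝ → ℝ} {d b : ℝ} (hd : 0 ≤ d) (hg : ContinuousOn g (Icc 0 d))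
    (h0 : ∃ u ∈ Icc 0 d, g u ≤ b) (h1 : b ≤ g d) : g (lastTime g d b) = b := by
  obtain ⟨hm, hle⟩ := lastTime_mem hd hg h0
  refine le_antisymm hle ?_
  by_contra hlt
  push Not at hlt
  obtain ⟨v, hv, hgv⟩ := intermediate_value_Icc hm.2
    (hg.mono (Icc_subset_Icc_left hm.1)) (show b ∈ Icc _ _ from ⟨hlt.le, h1⟩)
  have := le_lastTime (g := g) (d := d) (b := b) ⟨hm.1.trans hv.1, hv.2⟩ hgv.le
  have hveq : v = lastTime g d b := le_antisymm this hv.1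
  rw [hveq] at hgv
  linarith

lemma lastTime_mono {g : ℝ → ℝ} {d : ℝ} : Monotone (lastTime g d) := by
  intro b b' hbb
  unfold lastTime
  rcases eq_empty_or_nonempty {u | u ∈ Icc 0 d ∧ g u ≤ b} with h | h
  · rw [h, Real.sSup_empty]
    exact Real.sSup_nonneg (fun u hu => hu.1.1)
  · exact csSup_le_csSup ⟨d, fun v hv => hv.1.2⟩ h (fun u hu => ⟨hu.1, hu.2.trans hbb⟩)

/-- a generic level. -/
lemma exists_generic {g : ℝ → ℝ} {d : ℝ} (hd : 0 ≤ d) (hg : ContinuousOn g (Icc 0 d))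
    (h : g 0 < g d) :
    ∃ b, g 0 < b ∧ b < g d ∧ ∀ ε > 0, ∃ u ∈ Icc 0 d, lastTime g d b - ε < u ∧ g u < b := by
  have hc := (lastTime_mono (g := g) (d := d)).countable_not_continuousAt
  obtain ⟨b, hb, hcb⟩ : ∃ b ∈ Ioo (g 0) (g d), ContinuousAt (lastTime g d) b := by
    by_contra hcon
    push Not at hcon
    exact (Cardinal.Real.Ioo_countable_iff.mp (hc.mono (s₁ := Ioo (g 0) (g d)) hcon)).not_gt h
  refine ⟨b, hb.1, hb.2, fun ε hε => ?_⟩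
  have e1 : ∀ᶠ x in 𝓝 b, lastTime g d b - ε < lastTime g d x :=
    hcb.tendsto.eventually (lt_mem_nhds (by linarith))
  have e2 : ∀ᶠ x in 𝓝 b, g 0 < x := lt_mem_nhds hb.1
  have e3 : ∀ᶠ x in 𝓝[<] b, x < b := eventually_mem_nhdsWithin
  obtain ⟨x, ⟨h1, h2⟩, h3⟩ := (((e1.and e2).filter_mono nhdsWithin_le_nhds).and e3).exists
  have := lastTime_mem (b := x) hd hg ⟨0, left_mem_Icc.mpr hd, h2.le⟩
  exact ⟨_, this.1, h1, this.2.trans_lt h3⟩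

/-- sign computation at the half plane. -/
lemma sign_halfplane {γ δ : ℝ → ℂ} {d b aγ aδ : ℝ} {l : ℝ × ℝ → ℂ} (hl : IsLift γ δ d l)
    (hγ : ContinuousOn γ (Icc 0 d)) (hδ : ContinuousOn δ (Icc 0 d)) (hdisj : Disj γ δ d)
    (h1 : aγ ∈ Icc 0 d) (h2 : aδ ∈ Icc 0 d) (e1 : (γ aγ).re = b) (e2 : (δ aδ).re = b)
    (g1 : ∀ u ∈ Icc aγ d, b ≤ (γ u).re) (g2 : ∀ u ∈ Icc aδ d, b ≤ (δ u).re)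
    (d1 : b < (γ d).re) (d2 : b < (δ d).re) :
    0 < (l (d, aδ) - l (aγ, d)).im ↔ (γ aγ).im < (δ aδ).im := by
  have slit : ∀ z : ℂ, 0 ≤ z.re → z ≠ 0 → z ∈ Complex.slitPlane := by
    intro z hz hz0
    rw [Complex.mem_slitPlane_iff]
    rcases hz.lt_or_eq with h | h
    · exact Or.inl h
    · right
      intro h'
      exact hz0 (Complex.ext h.symm h')
  have md : d ∈ Icc 0 d := ⟨h1.1.trans h1.2, le_rfl⟩
  have sub1 : Icc aγ d ⊆ Icc 0 d := Icc_subset_Icc_left h1.1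
  have sub2 : Icc aδ d ⊆ Icc 0 d := Icc_subset_Icc_left h2.1
  have A1 := im_log_change (c := fun u => γ u - δ aδ) (l := fun u => l (u, aδ)) (k := -1) h1.2
    ((hγ.mono sub1).sub continuousOn_const)
    (hl.1.comp (f := fun u => (u, aδ)) (by fun_prop) (fun u hu => ⟨sub1 hu, h2⟩))
    (fun u hu => slit _ (by simp [e2, g1 u hu]) (sub_ne_zero.mpr (hdisj _ (sub1 hu) _ h2)))
    (fun u hu => by rw [hl.2 _ (sub1 hu) _ h2]; ring)
  have A2 := im_log_change (c := fun u => δ u - γ aγ) (l := fun u => l (aγ, u)) (k := 1) h2.2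
    ((hδ.mono sub2).sub continuousOn_const)
    (hl.1.comp (f := fun u => (aγ, u)) (by fun_prop) (fun u hu => ⟨h1, sub2 hu⟩))
    (fun u hu => slit _ (by simp [e1, g2 u hu]) (sub_ne_zero.mpr (hdisj _ h1 _ (sub2 hu)).symm))
    (fun u hu => by rw [hl.2 _ h1 _ (sub2 hu)]; ring)
  have b1 : |(γ d - δ aδ).arg| < Real.pi / 2 :=
    Complex.abs_arg_lt_pi_div_two_iff.mpr (Or.inl (by simp [e2, d1]))
  have b2 : |(δ d - γ aγ).arg| < Real.pi / 2 :=
    Complex.abs_arg_lt_pi_div_two_iff.mpr (Or.inl (by simp [e1, d2]))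
  rw [abs_lt] at b1 b2
  have hne : (γ aγ).im ≠ (δ aδ).im := fun h => hdisj _ h1 _ h2 (Complex.ext (by rw [e1, e2]) h)
  rw [Complex.sub_im]
  rcases lt_or_gt_of_ne hne with h | h
  · have p1 : (γ aγ - δ aδ).arg = -(Real.pi / 2) :=
      Complex.arg_eq_neg_pi_div_two_iff.mpr ⟨by simp [e1, e2], by simp [h]⟩
    have p2 : (δ aδ - γ aγ).arg = Real.pi / 2 :=
      Complex.arg_eq_pi_div_two_iff.mpr ⟨by simp [e1, e2], by simp [h]⟩
    rw [p1] at A1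
    rw [p2] at A2
    constructor
    · intro; exact h
    · intro; linarith
  · have p1 : (γ aγ - δ aδ).arg = Real.pi / 2 :=
      Complex.arg_eq_pi_div_two_iff.mpr ⟨by simp [e1, e2], by simp [h]⟩
    have p2 : (δ aδ - γ aγ).arg = -(Real.pi / 2) :=
      Complex.arg_eq_neg_pi_div_two_iff.mpr ⟨by simp [e1, e2], by simp [h]⟩
    rw [p1] at A1
    rw [p2] at A2
    constructor
    · intro; linarith
    · intro; linarith

lemma order_aux {α : ℝ → ℂ} {d : ℝ} (hd : 0 ≤ d) (hα : ContinuousOn α (Icc 0 d))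
    (hinj : InjOn α (Icc 0 d)) (hre : (α 0).re < (α d).re) :
    ∃ ρ > 0, ∃ Y : (ℝ → ℂ) → ℝ, ∀ γ δ : ℝ → ℂ,
      ContinuousOn γ (Icc 0 d) → ContinuousOn δ (Icc 0 d) →
      (∀ u ∈ Icc 0 d, ‖γ u - α u‖ < ρ) → (∀ u ∈ Icc 0 d, ‖δ u - α u‖ < ρ) → Disj γ δ d →
      (0 < ang γ δ d ↔ Y γ < Y δ) := by
  have m0 : (0:ℝ) ∈ Icc 0 d := left_mem_Icc.mpr hd
  have md : d ∈ Icc 0 d := right_mem_Icc.mpr hd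
  have hreα : ContinuousOn (fun u => (α u).re) (Icc 0 d) :=
    Complex.continuous_re.comp_continuousOn hα
  obtain ⟨b, hb0, hbd, hgen⟩ := exists_generic hd hreα hre
  set a := lastTime (fun u => (α u).re) d b with ha
  obtain ⟨ham, hab⟩ := lastTime_mem (b := b) hd hreα ⟨0, m0, hb0.le⟩
  have had : a < d := by
    rcases ham.2.lt_or_eq with h | h
    · exact h
    · exfalso
      have : (α d).re ≤ b := by
        have h' := hab
        simp only [h] at h'
        exact h'
      linarith
  -- μ
  set d1 := (a + d) / 2 with hd1
  obtain ⟨μ, hμ, hμ'⟩ : ∃ μ > 0, ∀ u ∈ Icc 0 d1, μ ≤ ‖α d - α u‖ := by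
    have hsub : Icc 0 d1 ⊆ Icc 0 d := Icc_subset_Icc_right (by linarith)
    obtain ⟨p, hp, hmin⟩ := (isCompact_Icc (a := (0:ℝ)) (b := d1)).exists_isMinOn
      (f := fun u => ‖α d - α u‖)
      ⟨0, left_mem_Icc.mpr (by linarith [ham.1])⟩
      ((continuousOn_const.sub (hα.mono hsub)).norm)
    refine ⟨‖α d - α p‖, ?_, fun u hu => hmin hu⟩
    rw [gt_iff_lt, norm_pos_iff, sub_ne_zero]
    intro h
    have := hinj md (hsub hp) h
    have := hp.2
    linarith
  -- uniform continuity
  obtain ⟨η, hη, hη'⟩ : ∃ η > 0, ∀ u ∈ Icc 0 d, ∀ v ∈ Icc 0 d, |u - v| < η → ‖α u - α v‖ < μ / 8 := by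
    have := isCompact_Icc.uniformContinuousOn_of_continuous hα
    rw [Metric.uniformContinuousOn_iff] at this
    obtain ⟨η, hη, h⟩ := this (μ / 8) (by positivity)
    exact ⟨η, hη, fun u hu v hv huv => by
      rw [← dist_eq_norm]; exact h u hu v hv (by rwa [Real.dist_eq])⟩
  set ε := min (η / 3) ((d - a) / 4) with hε
  have hεpos : 0 < ε := by
    apply lt_min <;> linarith
  have hε1 : ε ≤ η / 3 := min_le_left _ _
  have hε2 : ε ≤ (d - a) / 4 := min_le_right _ _
  obtain ⟨u0, hu0, hu0a, hu0b⟩ := hgen ε hεpos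
  -- lower bound on [a+ε, d]
  obtain ⟨m, hm, hm'⟩ : ∃ m > b, ∀ u ∈ Icc (a + ε) d, m ≤ (α u).re := by
    have hsub : Icc (a + ε) d ⊆ Icc 0 d := Icc_subset_Icc_left (by linarith [ham.1])
    obtain ⟨p, hp, hmin⟩ := (isCompact_Icc (a := a + ε) (b := d)).exists_isMinOn
      (f := fun u => (α u).re) ⟨d, right_mem_Icc.mpr (by linarith)⟩ (hreα.mono hsub)
    refine ⟨(α p).re, ?_, fun u hu => hmin hu⟩
    by_contra hcon
    push Not at hcon
    have := le_lastTime (g := fun u => (α u).re) (hsub hp) hcon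
    have := hp.1
    linarith
  set ρ := min (μ / 16) (min (b - (α u0).re) (m - b)) with hρ
  have hρpos : 0 < ρ := by
    refine lt_min (by positivity) (lt_min (by linarith) (by linarith))
  have hρ1 : ρ ≤ μ / 16 := min_le_left _ _
  have hρ2 : ρ ≤ b - (α u0).re := (min_le_right _ _).trans (min_le_left _ _)
  have hρ3 : ρ ≤ m - b := (min_le_right _ _).trans (min_le_right _ _)
  -- per-curve facts
  have key : ∀ γ : ℝ → ℂ, ContinuousOn γ (Icc 0 d) → (∀ u ∈ Icc 0 d, ‖γ u - α u‖ < ρ) →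
      lastTime (fun u => (γ u).re) d b ∈ Icc 0 d ∧
      |lastTime (fun u => (γ u).re) d b - a| ≤ ε ∧
      (γ (lastTime (fun u => (γ u).re) d b)).re = b ∧ b < (γ d).re ∧
      ∀ u ∈ Icc (lastTime (fun u => (γ u).re) d b) d, b ≤ (γ u).re := by
    intro γ hγ hγα
    have hreγ : ContinuousOn (fun u => (γ u).re) (Icc 0 d) :=
      Complex.continuous_re.comp_continuousOn hγ
    have hr : ∀ u ∈ Icc 0 d, |(γ u).re - (α u).re| < ρ := by
      intro u hu
      rw [← Complex.sub_re]
      exact (Complex.abs_re_le_norm _).trans_lt (hγα u hu)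
    have hu0' : (γ u0).re ≤ b := by
      have := abs_lt.mp (hr u0 hu0)
      linarith
    have hbig : ∀ u ∈ Icc (a + ε) d, b < (γ u).re := by
      intro u hu
      have h1 := hm' u hu
      have h2 := abs_lt.mp (hr u ⟨by linarith [ham.1, hu.1], hu.2⟩)
      linarith
    have hdb : b < (γ d).re := hbig d ⟨by linarith, le_rfl⟩
    obtain ⟨k1, k2⟩ := lastTime_mem (b := b) hd hreγ ⟨u0, hu0, hu0'⟩
    have k3 := lastTime_eq (b := b) hd hreγ ⟨u0, hu0, hu0'⟩ hdb.le
    refine ⟨k1, ?_, k3, hdb, ?_⟩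
    · rw [abs_le]
      constructor
      · have := le_lastTime (g := fun u => (γ u).re) hu0 hu0'
        linarith
      · by_contra hcon
        push Not at hcon
        have := hbig _ ⟨by linarith, k1.2⟩
        linarith
    · intro u hu
      rcases hu.1.lt_or_eq with h | h
      · by_contra hcon
        push Not at hcon
        have := le_lastTime (g := fun u => (γ u).re) (d := d) (b := b)
          ⟨k1.1.trans hu.1, hu.2⟩ hcon.le
        linarith
      · rw [← h]; exact k3.ge
  refine ⟨ρ, hρpos, fun γ => (γ (lastTime (fun u => (γ u).re) d b)).im, ?_⟩
  intro γ δ hγ hδ hγα hδα hdisj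
  obtain ⟨l, hl⟩ := exists_lift hd hγ hδ hdisj
  obtain ⟨k1, k2, k3, k4, k5⟩ := key γ hγ hγα
  obtain ⟨j1, j2, j3, j4, j5⟩ := key δ hδ hδα
  set aγ := lastTime (fun u => (γ u).re) d b
  set aδ := lastTime (fun u => (δ u).re) d b
  rw [ang_eq hd hl, ← sign_halfplane hl hγ hδ hdisj k1 j1 k3 j3 k5 j5 k4 j4]
  have scal : ∀ x ∈ Icc (0:ℝ) 1, ∀ c ∈ Icc 0 d, x * c ∈ Icc 0 d ∧ x * c ≤ c := by
    intro x hx c hc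
    have h1 : 0 ≤ x * c := mul_nonneg hx.1 hc.1
    have h2 : x * c ≤ c := mul_le_of_le_one_left hc.1 hx.2
    exact ⟨⟨h1, h2.trans hc.2⟩, h2⟩
  have := path_sign hl (a := 0) (b := 1) zero_le_one
    (s := fun x => x * aγ) (s' := fun x => x * aδ) (t := fun _ => d) (t' := fun _ => d)
    (by fun_prop) (by fun_prop) (by fun_prop) (by fun_prop)
    (fun x hx => (scal x hx _ k1).1) (fun _ _ => md)
    (fun x hx => (scal x hx _ j1).1) (fun _ _ => md) ?_
  · simpa using this
  · intro x hx
    obtain ⟨s1, s2⟩ := scal x hx _ k1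
    obtain ⟨s1', s2'⟩ := scal x hx _ j1
    set s := x * aγ
    set s' := x * aδ
    have hss : |s' - s| < η := by
      have : s' - s = x * (aδ - aγ) := by ring
      rw [this, abs_mul, abs_of_nonneg hx.1]
      have h1 : |aδ - aγ| ≤ 2 * ε := by
        rw [abs_le] at k2 j2 ⊢
        constructor <;> linarith
      calc x * |aδ - aγ| ≤ 1 * |aδ - aγ| := by gcongr; exact hx.2
        _ < η := by linarith
    have n1 := hη' s' s1' s s1 hss
    have n2 := hμ' s ⟨s1.1, by rw [abs_le] at k2; linarith⟩
    have n3 := hγα s s1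
    have n4 := hδα s' s1'
    have n5 := hγα d md
    have n6 := hδα d md
    have L : ‖(δ s' - γ s) + (δ d - γ d)‖ ≤ ‖δ s' - α s'‖ + ‖α s' - α s‖ + ‖γ s - α s‖ + ‖δ d - α d‖
        + ‖γ d - α d‖ := by
      have : (δ s' - γ s) + (δ d - γ d) = (δ s' - α s') + (α s' - α s) - (γ s - α s) + (δ d - α d)
        - (γ d - α d) := by ring
      rw [this]
      refine (norm_sub_le _ _).trans (add_le_add_left ?_ _)
      refine (norm_add_le _ _).trans (add_le_add_left ?_ _)
      refine (norm_sub_le _ _).trans (add_le_add_left ?_ _)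
      exact norm_add_le _ _
    have R : ‖α d - α s‖ ≤ ‖δ d - γ s‖ + ‖δ d - α d‖ + ‖γ s - α s‖ := by
      have : α d - α s = (δ d - γ s) - (δ d - α d) + (γ s - α s) := by ring
      rw [this]
      refine (norm_add_le _ _).trans (add_le_add_left ?_ _)
      exact norm_sub_le _ _
    linarith

lemma ang_mul {γ δ : ℝ → ℂ} {d : ℝ} (hd : 0 ≤ d) {l : ℝ × ℝ → ℂ} (hl : IsLift γ δ d l) {c : ℂ}
    (hc : c ≠ 0) : ang (fun u => c * γ u) (fun u => c * δ u) d = ang γ δ d := by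
  have : IsLift (fun u => c * γ u) (fun u => c * δ u) d (fun p => l p + Complex.log c) := by
    refine ⟨hl.1.add continuousOn_const, fun u hu v hv => ?_⟩
    rw [Complex.exp_add, hl.2 u hu v hv, Complex.exp_log hc]
    ring
  rw [ang_eq hd hl, ang_eq hd this]
  congr 1
  ring

/-- the sign is given by a linear preorder, for curves near a simple curve `α`. -/
lemma exists_order {α : ℝ → ℂ} {d : ℝ} (hd : 0 < d) (hα : ContinuousOn α (Icc 0 d))
    (hinj : InjOn α (Icc 0 d)) :
    ∃ ρ > 0, ∃ Y : (ℝ → ℂ) → ℝ, ∀ γ δ : ℝ → ℂ,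
      ContinuousOn γ (Icc 0 d) → ContinuousOn δ (Icc 0 d) →
      (∀ u ∈ Icc 0 d, ‖γ u - α u‖ < ρ) → (∀ u ∈ Icc 0 d, ‖δ u - α u‖ < ρ) → Disj γ δ d →
      (0 < ang γ δ d ↔ Y γ < Y δ) := by
  have m0 : (0:ℝ) ∈ Icc 0 d := left_mem_Icc.mpr hd.le
  have md : d ∈ Icc 0 d := right_mem_Icc.mpr hd.le
  have hne : α d - α 0 ≠ 0 := sub_ne_zero.mpr (fun h => hd.ne' (hinj md m0 h))
  set c := (α d - α 0)⁻¹ with hc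
  have hc0 : c ≠ 0 := inv_ne_zero hne
  have hcpos : 0 < ‖c‖ := norm_pos_iff.mpr hc0
  obtain ⟨ρ, hρ, Y, hY⟩ := order_aux (α := fun u => c * α u) hd.le (continuousOn_const.mul hα)
    (fun u hu v hv h => hinj hu hv (mul_left_cancel₀ hc0 h)) (by
      have : c * α d - c * α 0 = 1 := by rw [← mul_sub, hc, inv_mul_cancel₀ hne]
      have := congrArg Complex.re this
      simp only [Complex.sub_re, Complex.one_re] at this
      linarith)
  refine ⟨ρ / ‖c‖, by positivity, fun γ => Y (fun u => c * γ u), ?_⟩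
  intro γ δ hγ hδ h1 h2 hdisj
  obtain ⟨l, hl⟩ := exists_lift hd.le hγ hδ hdisj
  rw [← ang_mul hd.le hl hc0]
  refine hY _ _ (continuousOn_const.mul hγ) (continuousOn_const.mul hδ) ?_ ?_ ?_
  · intro u hu
    rw [← mul_sub, norm_mul, mul_comm, ← lt_div_iff₀ hcpos]
    exact h1 u hu
  · intro u hu
    rw [← mul_sub, norm_mul, mul_comm, ← lt_div_iff₀ hcpos]
    exact h2 u hu
  · intro u hu v hv h
    exact hdisj u hu v hv (mul_left_cancel₀ hc0 h)

lemma odd_sign {A : ℤ} {s : ℝ} (hs : |s| < 1) : 0 < Real.pi * ((1 + 2 * A : ℤ) : ℝ) + s ↔ 0 < 1 + 2 * A := by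
  have h3 := Real.pi_gt_three
  rw [abs_lt] at hs
  constructor
  · intro h
    by_contra hcon
    have : (1 + 2 * A : ℤ) ≤ -1 := by omega
    have : ((1 + 2 * A : ℤ) : ℝ) ≤ -1 := by exact_mod_cast this
    nlinarith
  · intro h
    have : (1 : ℤ) ≤ (1 + 2 * A : ℤ) := by omega
    have : (1 : ℝ) ≤ ((1 + 2 * A : ℤ) : ℝ) := by exact_mod_cast this
    nlinarith

lemma exp_eq_log_ratio {x y z : ℂ} (hy : y ≠ 0) (hz : z ≠ 0) (hl : Complex.exp x = z) {m : ℂ}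
    (hm : Complex.exp m = y) : ∃ j : ℤ, x = m + Complex.log (z / y) + j * (2 * Real.pi * Complex.I) := by
  apply Complex.exp_eq_exp_iff_exists_int.mp
  rw [Complex.exp_add, hm, Complex.exp_log (div_ne_zero hz hy), hl]
  field_simp

/-- the logarithmic difference lift of an injective map. -/
lemma chart_lift {k : ℂ → ℂ} (hk : Continuous k) (hinj : Function.Injective k) :
    ∃ (L : ℂ × ℂ → ℂ) (n : ℤ), Continuous L ∧
      (∀ p u, Complex.exp (L (p, u)) = k (p + Complex.exp u) - k p) ∧
      (∀ p u, L (p + Complex.exp u, u + Real.pi * Complex.I) =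
        L (p, u) + (1 + 2 * n) * (Real.pi * Complex.I)) ∧
      (∀ p u, ∀ j : ℤ, L (p, u + j * (2 * Real.pi * Complex.I)) =
        L (p, u) + 2 * j * ((1 + 2 * n) * (Real.pi * Complex.I))) := by
  obtain ⟨L, hL, hL'⟩ := exists_log (X := ℂ × ℂ) (fun q => k (q.1 + Complex.exp q.2) - k q.1)
    (by fun_prop)
    (by
      intro q h
      have := hinj (sub_eq_zero.mp h)
      simp at this)
  have hexp : ∀ p u, Complex.exp (L (p, u)) = k (p + Complex.exp u) - k p := fun p u => hL' (p, u)
  have hpi : ∀ u : ℂ, Complex.exp (u + Real.pi * Complex.I) = - Complex.exp u := by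
    intro u
    rw [Complex.exp_add, Complex.exp_pi_mul_I]; ring
  have hneg : ∀ q : ℂ × ℂ, Complex.exp
      (L (q.1 + Complex.exp q.2, q.2 + Real.pi * Complex.I) - L q) = -1 := by
    rintro ⟨p, u⟩
    simp only
    have h0 : k (p + Complex.exp u) - k p ≠ 0 := by
      rw [← hexp]; exact Complex.exp_ne_zero _
    rw [Complex.exp_sub, hexp, hexp, hpi]
    field_simp
    rw [add_neg_cancel_right]
    ring
  have hD : Continuous (fun q : ℂ × ℂ => L (q.1 + Complex.exp q.2, q.2 + Real.pi * Complex.I) - L q) := by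
    fun_prop
  obtain ⟨n, hn⟩ : ∃ n : ℤ, L (0 + Complex.exp 0, 0 + Real.pi * Complex.I) - L (0, 0) =
      Real.pi * Complex.I + n * (2 * Real.pi * Complex.I) := by
    apply Complex.exp_eq_exp_iff_exists_int.mp
    rw [Complex.exp_pi_mul_I]
    exact hneg (0, 0)
  have h1 : ∀ p u, L (p + Complex.exp u, u + Real.pi * Complex.I) =
        L (p, u) + (1 + 2 * n) * (Real.pi * Complex.I) := by
    intro p u
    have := const_of_exp (isPreconnected_univ (α := ℂ × ℂ)) hD.continuousOn (fun x _ => hneg x)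
      (mem_univ (p, u)) (mem_univ (0, 0))
    simp only at this
    rw [hn] at this
    linear_combination this
  have h2 : ∀ p u, L (p, u + 2 * Real.pi * Complex.I) =
        L (p, u) + 2 * ((1 + 2 * n) * (Real.pi * Complex.I)) := by
    intro p u
    have a1 := h1 p u
    have a2 := h1 (p + Complex.exp u) (u + Real.pi * Complex.I)
    rw [hpi, add_neg_cancel_right, a1] at a2
    rw [show u + 2 * Real.pi * Complex.I = u + Real.pi * Complex.I + Real.pi * Complex.I by ring, a2]
    ring
  refine ⟨L, n, hL, hexp, h1, ?_⟩
  intro p u j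
  induction j using Int.induction_on with
  | zero => simp
  | succ j ih =>
    have := h2 p (u + ((j : ℤ) : ℂ) * (2 * Real.pi * Complex.I))
    rw [ih] at this
    push_cast at this ⊢
    rw [show u + ((j : ℂ) + 1) * (2 * Real.pi * Complex.I)
      = u + (j : ℂ) * (2 * Real.pi * Complex.I) + 2 * Real.pi * Complex.I by ring, this]
    ring
  | pred j ih =>
    have := h2 p (u + ((-(j : ℤ) - 1 : ℤ) : ℂ) * (2 * Real.pi * Complex.I))
    rw [show u + ((-(j : ℤ) - 1 : ℤ) : ℂ) * (2 * Real.pi * Complex.I) + 2 * Real.pi * Complex.I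
      = u + ((-(j : ℤ) : ℤ) : ℂ) * (2 * Real.pi * Complex.I) by push_cast; ring, ih] at this
    push_cast at this ⊢
    linear_combination -this

/-- sign of `ang` under a change of charts. -/
lemma chart_change {k : ℂ → ℂ} (hk : Continuous k) (hinj : Function.Injective k) :
    ∃ ε : Prop, ∀ a b : ℂ, a ≠ b → ∃ ρ > 0, ∀ (d : ℝ) (γ δ : ℝ → ℂ), 0 ≤ d →
      ContinuousOn γ (Icc 0 d) → ContinuousOn δ (Icc 0 d) → Disj γ δ d →
      ‖γ 0 - a‖ < ρ → ‖δ 0 - a‖ < ρ → ‖γ d - b‖ < ρ → ‖δ d - b‖ < ρ →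
      (0 < ang (k ∘ γ) (k ∘ δ) d ↔ (0 < ang γ δ d ↔ ε)) := by
  obtain ⟨L, n, hL, hexp, hflip, hper⟩ := chart_lift hk hinj
  refine ⟨0 < 1 + 2 * n, ?_⟩
  intro a b hab
  have hba : b - a ≠ 0 := sub_ne_zero.mpr hab.symm
  have hba' : a - b ≠ 0 := sub_ne_zero.mpr hab
  set lam := Complex.log (b - a) with hlam
  have hlam' : Complex.exp lam = b - a := Complex.exp_log hba
  have hlam2 : Complex.exp (lam + Real.pi * Complex.I) = a - b := by
    rw [Complex.exp_add, Complex.exp_pi_mul_I, hlam']; ring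
  -- continuity
  have c1 : ContinuousAt (fun q : ℂ × ℂ => Complex.log ((q.2 - q.1) / (b - a))) (a, b) := by
    refine ContinuousAt.clog (by fun_prop) ?_
    simp [div_self hba]
  have c2 : ContinuousAt (fun q : ℂ × ℂ => Complex.log ((q.1 - q.2) / (a - b))) (a, b) := by
    refine ContinuousAt.clog (by fun_prop) ?_
    simp [div_self hba']
  have c3 : ContinuousAt (fun q : ℂ × ℂ => L (q.1, lam + Complex.log ((q.2 - q.1) / (b - a)))) (a, b) :=
    hL.continuousAt.comp (continuousAt_fst.prodMk (continuousAt_const.add c1))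
  have c4 : ContinuousAt (fun q : ℂ × ℂ => L (q.2, lam + Real.pi * Complex.I +
      Complex.log ((q.1 - q.2) / (a - b)))) (a, b) :=
    hL.continuousAt.comp (continuousAt_snd.prodMk (continuousAt_const.add c2))
  have key : ∀ g : ℂ × ℂ → ℂ, ContinuousAt g (a, b) →
      ∀ᶠ q in 𝓝 (a, b), |(g q - g (a, b)).im| < 1/2 := by
    intro g hg
    have : ContinuousAt (fun q => |(g q - g (a, b)).im|) (a, b) :=
      (Complex.continuous_im.continuousAt.comp (hg.sub continuousAt_const)).abs
    exact this.eventually (gt_mem_nhds (by simp))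
  obtain ⟨ρ, hρ, hball⟩ := Metric.eventually_nhds_iff.mp
    ((key _ c1).and ((key _ c2).and ((key _ c3).and (key _ c4))))
  refine ⟨ρ, hρ, ?_⟩
  intro d γ δ hd hγ hδ hdisj g0 d0 gd dd
  have m0 : (0:ℝ) ∈ Icc 0 d := left_mem_Icc.mpr hd
  have md : d ∈ Icc 0 d := right_mem_Icc.mpr hd
  obtain ⟨l, hl⟩ := exists_lift hd hγ hδ hdisj
  have hl2 : IsLift (k ∘ γ) (k ∘ δ) d (fun p => L (γ p.1, l p)) := by
    refine ⟨?_, ?_⟩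
    · exact hL.comp_continuousOn ((hγ.comp continuousOn_fst (fun p hp => hp.1)).prodMk hl.1)
    · intro u hu v hv
      simp only [hexp, Function.comp]
      rw [hl.2 u hu v hv, add_sub_cancel]
  rw [ang_eq hd hl, ang_eq hd hl2]
  simp only
  have h1 := hball (y := (γ 0, δ d)) (by
    rw [Prod.dist_eq, dist_eq_norm, dist_eq_norm]; exact max_lt g0 dd)
  have h2 := hball (y := (δ 0, γ d)) (by
    rw [Prod.dist_eq, dist_eq_norm, dist_eq_norm]; exact max_lt d0 gd)
  obtain ⟨j, hj⟩ := exp_eq_log_ratio hba (sub_ne_zero.mpr (hdisj _ m0 _ md).symm)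
    (hl.2 _ m0 _ md) hlam'
  obtain ⟨j', hj'⟩ := exp_eq_log_ratio hba' (sub_ne_zero.mpr (hdisj _ md _ m0).symm)
    (hl.2 _ md _ m0) hlam2
  have s1 := h1.1
  have s2 := h2.2.1
  have s3 := h1.2.2.1
  have s4 := h2.2.2.2
  simp only [div_self hba, div_self hba', Complex.log_one, sub_zero, add_zero] at s1 s2 s3 s4
  have fl := hflip a lam
  rw [hlam', add_sub_cancel] at fl
  rw [fl] at s4
  rw [hj, hj', hper, hper]
  set x1 := Complex.log ((δ d - γ 0) / (b - a))
  set x2 := Complex.log ((δ 0 - γ d) / (a - b))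
  set x3 := L (γ 0, lam + x1)
  set x4 := L (γ d, lam + Real.pi * Complex.I + x2)
  have e1 : (lam + Real.pi * Complex.I + x2 + j' * (2 * Real.pi * Complex.I)
      - (lam + x1 + j * (2 * Real.pi * Complex.I))).im
      = Real.pi * ((1 + 2 * (j' - j) : ℤ) : ℝ) + (x2.im - x1.im) := by
    rw [show lam + Real.pi * Complex.I + x2 + j' * (2 * Real.pi * Complex.I)
      - (lam + x1 + j * (2 * Real.pi * Complex.I)) =
      ((Real.pi * ((1 + 2 * (j' - j) : ℤ) : ℝ) : ℝ) : ℂ) * Complex.I + (x2 - x1) by push_cast; ring]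
    rw [Complex.add_im, Complex.im_ofReal_mul, Complex.sub_im, Complex.I_im, mul_one]
  have e2 : (x4 + 2 * j' * ((1 + 2 * n) * (Real.pi * Complex.I)) -
      (x3 + 2 * j * ((1 + 2 * n) * (Real.pi * Complex.I)))).im
      = Real.pi * ((1 + 2 * (n + (j' - j) * (1 + 2 * n)) : ℤ) : ℝ) +
        ((x4 - (L (a, lam) + (1 + 2 * n) * (Real.pi * Complex.I))).im - (x3 - L (a, lam)).im) := by
    rw [← Complex.sub_im, show x4 + 2 * j' * ((1 + 2 * n) * (Real.pi * Complex.I)) -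
      (x3 + 2 * j * ((1 + 2 * n) * (Real.pi * Complex.I))) =
      ((Real.pi * ((1 + 2 * (n + (j' - j) * (1 + 2 * n)) : ℤ) : ℝ) : ℝ) : ℂ) * Complex.I +
       ((x4 - (L (a, lam) + (1 + 2 * n) * (Real.pi * Complex.I))) - (x3 - L (a, lam))) by
        push_cast; ring]
    rw [Complex.add_im]
    congr 1
    simp
  rw [e1, e2, odd_sign, odd_sign]
  · have : 1 + 2 * (n + (j' - j) * (1 + 2 * n)) = (1 + 2 * (j' - j)) * (1 + 2 * n) := by ring
    rw [this]
    have o1 : 1 + 2 * (j' - j) ≠ 0 := by omega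
    have o2 : 1 + 2 * n ≠ 0 := by omega
    rw [mul_pos_iff]
    constructor
    · rintro (⟨p, q⟩ | ⟨p, q⟩)
      · exact ⟨fun _ => q, fun _ => p⟩
      · exact ⟨fun r => absurd r (by omega), fun r => absurd r (by omega)⟩
    · intro h
      by_cases hp : 0 < 1 + 2 * (j' - j)
      · exact Or.inl ⟨hp, h.mp hp⟩
      · right
        refine ⟨by omega, ?_⟩
        by_contra hq
        exact hp (h.mpr (by omega))
  · rw [abs_lt] at s1 s2 ⊢
    constructor <;> linarith
  · rw [abs_lt] at s3 s4 ⊢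
    constructor <;> linarith

section charts
variable {X F : Type*} [TopologicalSpace X] [TopologicalSpace F]

/-- the curve of `H z` read in the chart `ψ`. -/
noncomputable def cur (H : X → ℝ → F) (ψ : ℂ → F) (z : X) (u : ℝ) : ℂ :=
  Function.invFun ψ (H z u)

lemma invFun_cont {ψ : ℂ → F} (hψ : IsOpenEmbedding ψ) {q : F} (hq : q ∈ range ψ) :
    ContinuousAt (Function.invFun ψ) q := by
  obtain ⟨p, rfl⟩ := hq
  rw [hψ.continuousAt_iff.symm]
  have : Function.invFun ψ ∘ ψ = id := Function.invFun_comp hψ.injective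
  rw [this]
  exact continuousAt_id

lemma psi_invFun {ψ : ℂ → F} {q : F} (hq : q ∈ range ψ) : ψ (Function.invFun ψ q) = q :=
  Function.invFun_eq hq

variable {H : X → ℝ → F}

lemma cur_cont (hH : Continuous (fun p : X × ℝ => H p.1 p.2)) {ψ : ℂ → F} (hψ : IsOpenEmbedding ψ) {d : ℝ} {z : X}
    (hz : ∀ u ∈ Icc 0 d, H z u ∈ range ψ) : ContinuousOn (cur H ψ z) (Icc 0 d) := by
  intro u hu
  have h1 : ContinuousAt (fun u => H z u) u :=
    (hH.comp (Continuous.prodMk_right z)).continuousAt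
  exact (ContinuousAt.comp (f := fun u => H z u) (invFun_cont hψ (hz u hu)) h1).continuousWithinAt

lemma cur_near (hH : Continuous (fun p : X × ℝ => H p.1 p.2)) {ψ : ℂ → F} (hψ : IsOpenEmbedding ψ) {d : ℝ} {x : X}
    (hx : ∀ u ∈ Icc 0 d, H x u ∈ range ψ) {ρ : ℝ} (hρ : 0 < ρ) :
    ∀ᶠ z in 𝓝 x, ∀ u ∈ Icc 0 d, H z u ∈ range ψ ∧ ‖cur H ψ z u - cur H ψ x u‖ < ρ := by
  refine (isCompact_Icc (a := (0:ℝ)) (b := d)).eventually_forall_of_forall_eventually ?_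
  intro u hu
  have h1 : ContinuousAt (fun p : X × ℝ => H p.1 p.2) (x, u) := hH.continuousAt
  have h2 : ContinuousAt (fun p : X × ℝ => cur H ψ p.1 p.2) (x, u) :=
    ContinuousAt.comp (f := fun p : X × ℝ => H p.1 p.2) (invFun_cont hψ (hx u hu)) h1
  have h3 : ContinuousAt (fun p : X × ℝ => cur H ψ x p.2) (x, u) := by
    have : ContinuousAt (fun p : X × ℝ => H x p.2) (x, u) :=
      (hH.comp (continuous_const.prodMk continuous_snd)).continuousAt
    exact ContinuousAt.comp (f := fun p : X × ℝ => H x p.2) (invFun_cont hψ (hx u hu)) this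
  have h4 : ContinuousAt (fun p : X × ℝ => ‖cur H ψ p.1 p.2 - cur H ψ x p.2‖) (x, u) :=
    (h2.sub h3).norm
  exact (h1.eventually (hψ.isOpen_range.mem_nhds (hx u hu))).and
    (h4.eventually (gt_mem_nhds (by simpa using hρ)))

lemma cur_disj {ψ : ℂ → F} {d : ℝ} {z z' : X}
    (hz : ∀ u ∈ Icc 0 d, H z u ∈ range ψ) (hz' : ∀ u ∈ Icc 0 d, H z' u ∈ range ψ)
    (h : ∀ u ∈ Icc 0 d, ∀ v ∈ Icc 0 d, H z u ≠ H z' v) : Disj (cur H ψ z) (cur H ψ z') d := by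
  intro u hu v hv e
  apply h u hu v hv
  rw [← psi_invFun (hz u hu), ← psi_invFun (hz' v hv)]
  exact congrArg ψ e

lemma cur_inj {ψ : ℂ → F} {d : ℝ} {z : X}
    (hz : ∀ u ∈ Icc 0 d, H z u ∈ range ψ)
    (h : InjOn (H z) (Icc 0 d)) : InjOn (cur H ψ z) (Icc 0 d) := by
  intro u hu v hv e
  apply h hu hv
  rw [← psi_invFun (hz u hu), ← psi_invFun (hz v hv)]
  exact congrArg ψ e

lemma quad_est {a0 at' g0 gt d0 dt : ℂ} {ρ : ℝ} (h : 6 * ρ ≤ ‖at' - a0‖)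
    (h1 : ‖g0 - a0‖ < ρ) (h2 : ‖gt - at'‖ < ρ) (h3 : ‖d0 - a0‖ < ρ) (h4 : ‖dt - at'‖ < ρ) :
    ‖(d0 - g0) + (dt - gt)‖ < ‖dt - g0‖ := by
  have e1 : ‖(d0 - g0) + (dt - gt)‖ ≤ ‖d0 - a0‖ + ‖g0 - a0‖ + ‖dt - at'‖ + ‖gt - at'‖ := by
    calc _ = ‖(((d0 - a0) - (g0 - a0)) + (dt - at')) - (gt - at')‖ := by congr 1; ring
      _ ≤ ‖((d0 - a0) - (g0 - a0)) + (dt - at')‖ + ‖gt - at'‖ := norm_sub_le _ _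
      _ ≤ ‖(d0 - a0) - (g0 - a0)‖ + ‖dt - at'‖ + ‖gt - at'‖ := by gcongr; exact norm_add_le _ _
      _ ≤ _ := by gcongr; exact norm_sub_le _ _
  have e2 : ‖at' - a0‖ ≤ ‖dt - g0‖ + ‖g0 - a0‖ + ‖dt - at'‖ := by
    calc _ = ‖((dt - g0) + (g0 - a0)) - (dt - at')‖ := by congr 1; ring
      _ ≤ ‖(dt - g0) + (g0 - a0)‖ + ‖dt - at'‖ := norm_sub_le _ _
      _ ≤ _ := by gcongr; exact norm_add_le _ _
  linarith

/-- comparison with a smaller chart. -/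
lemma compare (adm : X → X → Prop)
    (hH : Continuous (fun p : X × ℝ => H p.1 p.2))
    {ψ ψ' : ℂ → F} (hψ : IsOpenEmbedding ψ) (hψ' : IsOpenEmbedding ψ')
    (hsub : range ψ' ⊆ range ψ) {d d' : ℝ} (hd' : 0 < d') (hdd : d' ≤ d)
    (hadm : ∀ z z', adm z z' → ∀ u ∈ Icc 0 d, ∀ v ∈ Icc 0 d, H z u ≠ H z' v)
    {y : X} (hy : ∀ u ∈ Icc 0 d, H y u ∈ range ψ) (hy' : ∀ u ∈ Icc 0 d', H y u ∈ range ψ')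
    (hinj : InjOn (H y) (Icc 0 d)) :
    ∃ ε : Prop, ∀ᶠ p in 𝓝 y ×ˢ 𝓝 y, adm p.1 p.2 →
      (0 < ang (cur H ψ p.1) (cur H ψ p.2) d ↔
        (0 < ang (cur H ψ' p.1) (cur H ψ' p.2) d' ↔ ε)) := by
  have m0 : (0:ℝ) ∈ Icc 0 d := left_mem_Icc.mpr (hd'.le.trans hdd)
  have m0' : (0:ℝ) ∈ Icc 0 d' := left_mem_Icc.mpr hd'.le
  have md' : d' ∈ Icc 0 d' := right_mem_Icc.mpr hd'.le
  have sub : Icc 0 d' ⊆ Icc 0 d := Icc_subset_Icc_right hdd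
  set k : ℂ → ℂ := fun p => Function.invFun ψ (ψ' p) with hkdef
  have hk : Continuous k := by
    rw [continuous_iff_continuousAt]
    intro p
    exact ContinuousAt.comp (f := ψ') (invFun_cont hψ (hsub (mem_range_self p)))
      hψ'.continuous.continuousAt
  have hkinj : Function.Injective k := by
    intro p q h
    apply hψ'.injective
    rw [← psi_invFun (hsub (mem_range_self p)), ← psi_invFun (hsub (mem_range_self q))]
    exact congrArg ψ h
  obtain ⟨ε, hε⟩ := chart_change hk hkinj
  refine ⟨ε, ?_⟩
  have hab : cur H ψ' y 0 ≠ cur H ψ' y d' := fun h =>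
    hd'.ne ((cur_inj hy' (hinj.mono sub)) m0' md' h)
  obtain ⟨ρ1, hρ1, h1⟩ := hε _ _ hab
  have hcy := cur_cont hH hψ hy
  have hiy := cur_inj hy hinj
  obtain ⟨t0, ht0, hmin⟩ := (isCompact_Icc (a := d') (b := d)).exists_isMinOn
    (nonempty_Icc.mpr hdd) (f := fun t => ‖cur H ψ y t - cur H ψ y 0‖)
    (ContinuousOn.norm ((hcy.mono (Icc_subset_Icc_left hd'.le)).sub continuousOn_const))
  set μ := ‖cur H ψ y t0 - cur H ψ y 0‖ with hμ
  have hμpos : 0 < μ := by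
    rw [hμ, norm_pos_iff, sub_ne_zero]
    intro h
    have := hiy ⟨hd'.le.trans ht0.1, ht0.2⟩ m0 h
    linarith [ht0.1]
  have n1 := cur_near hH hψ hy (ρ := μ / 6) (by positivity)
  have n2 := cur_near hH hψ' hy' hρ1
  filter_upwards [(n1.and n2).prod_mk (n1.and n2)]
  rintro ⟨z, w⟩ ⟨⟨a1, a2⟩, ⟨b1, b2⟩⟩ hzw
  simp only at a1 a2 b1 b2 hzw ⊢
  have cz := cur_cont hH hψ (fun u hu => (a1 u hu).1)
  have cw := cur_cont hH hψ (fun u hu => (b1 u hu).1)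
  have cz' := cur_cont hH hψ' (fun u hu => (a2 u hu).1)
  have cw' := cur_cont hH hψ' (fun u hu => (b2 u hu).1)
  have dj := cur_disj (fun u hu => (a1 u hu).1) (fun u hu => (b1 u hu).1) (hadm z w hzw)
  have dj' := cur_disj (fun u hu => (a2 u hu).1) (fun u hu => (b2 u hu).1)
    (fun u hu v hv => hadm z w hzw u (sub hu) v (sub hv))
  obtain ⟨l, hl⟩ := exists_lift (hd'.le.trans hdd) cz cw dj
  rw [← ang_shrink hd'.le hdd hl]
  · rw [← h1 d' _ _ hd'.le cz' cw' dj' (a2 0 m0').2 (b2 0 m0').2 (a2 d' md').2 (b2 d' md').2]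
    have hl' : IsLift (k ∘ cur H ψ' z) (k ∘ cur H ψ' w) d' l := by
      refine (hl.mono hdd).congr ?_ ?_
      · intro u hu
        simp only [hkdef, cur, Function.comp]
        rw [psi_invFun (a2 u hu).1]
      · intro u hu
        simp only [hkdef, cur, Function.comp]
        rw [psi_invFun (b2 u hu).1]
    rw [ang_eq hd'.le hl', ang_eq hd'.le (hl.mono hdd)]
  · intro t ht
    have mt : t ∈ Icc 0 d := ⟨hd'.le.trans ht.1, ht.2⟩
    refine quad_est (ρ := μ / 6) ?_ (a1 0 m0).2 (a1 t mt).2 (b1 0 m0).2 (b1 t mt).2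
    have := hmin ht
    simp only [mem_ofPred_eq] at this
    linarith

/-- The local statement. -/
theorem local_prop (adm : X → X → Prop)
    (hH : Continuous (fun p : X × ℝ => H p.1 p.2))
    (hinj : ∀ x, InjOn (H x) (Icc 0 (1/2)))
    (hadm : ∀ z z', adm z z' → ∀ u ∈ Icc (0:ℝ) (1/2), ∀ v ∈ Icc (0:ℝ) (1/2), H z u ≠ H z' v)
    (hF : ∀ q : F, ∀ W : Set F, IsOpen W → q ∈ W →
      ∃ ψ : ℂ → F, IsOpenEmbedding ψ ∧ q ∈ range ψ ∧ range ψ ⊆ W) :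
    ∃ (O : X → Set X) (R : X → X → X → Prop),
      (∀ x, O x ∈ 𝓝 x) ∧
      (∀ x, ∀ z ∈ O x, ∀ w ∈ O x, adm z w → (R x z w ↔ ¬ R x w z)) ∧
      (∀ x, ∀ a ∈ O x, ∀ b ∈ O x, ∀ c ∈ O x, adm a b → adm b c → adm a c →
        R x a b → R x b c → R x a c) ∧
      (∀ x, ∀ z ∈ O x, ∀ w ∈ O x, adm z w →
        ∀ᶠ p in 𝓝 z ×ˢ 𝓝 w, (R x p.1 p.2 ↔ R x z w)) ∧
      (∀ x x' y, y ∈ O x → y ∈ O x' → ∃ ε : Prop, ∀ᶠ p in 𝓝 y ×ˢ 𝓝 y, adm p.1 p.2 →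
        (R x p.1 p.2 ↔ (R x' p.1 p.2 ↔ ε))) := by
  -- choose charts
  have hsmall : ∀ (x : X) (ψ : ℂ → F), IsOpenEmbedding ψ → H x 0 ∈ range ψ → ∀ m > 0,
      ∃ d, 0 < d ∧ d ≤ m ∧ ∀ u ∈ Icc 0 d, H x u ∈ range ψ := by
    intro x ψ hψ h0 m hm
    have : ContinuousAt (H x) 0 := (hH.comp (Continuous.prodMk_right x)).continuousAt
    obtain ⟨r, hr, hr'⟩ := Metric.eventually_nhds_iff.mp
      (this.eventually (hψ.isOpen_range.mem_nhds h0))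
    refine ⟨min m (r / 2), by positivity, min_le_left _ _, ?_⟩
    intro u hu
    apply hr'
    rw [Real.dist_eq, sub_zero, abs_of_nonneg hu.1]
    have := hu.2.trans (min_le_right _ _)
    linarith
  have hex : ∀ x : X, ∃ (ψ : ℂ → F) (d : ℝ), IsOpenEmbedding ψ ∧ 0 < d ∧ d ≤ 1/2 ∧
      ∀ u ∈ Icc 0 d, H x u ∈ range ψ := by
    intro x
    obtain ⟨ψ, hψ, h0, -⟩ := hF (H x 0) univ isOpen_univ (mem_univ _)
    obtain ⟨d, h1, h2, h3⟩ := hsmall x ψ hψ h0 (1/2) (by norm_num)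
    exact ⟨ψ, d, hψ, h1, h2, h3⟩
  choose ψ d hψ hd0 hd1 hdom using hex
  have sub : ∀ x, Icc 0 (d x) ⊆ Icc 0 (1/2) := fun x => Icc_subset_Icc_right (hd1 x)
  have hord : ∀ x : X, ∃ ρ > 0, 6 * ρ ≤ ‖cur H (ψ x) x (d x) - cur H (ψ x) x 0‖ ∧
      ∃ Y : (ℝ → ℂ) → ℝ, ∀ γ δ : ℝ → ℂ,
      ContinuousOn γ (Icc 0 (d x)) → ContinuousOn δ (Icc 0 (d x)) →
      (∀ u ∈ Icc 0 (d x), ‖γ u - cur H (ψ x) x u‖ < ρ) →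
      (∀ u ∈ Icc 0 (d x), ‖δ u - cur H (ψ x) x u‖ < ρ) → Disj γ δ (d x) →
      (0 < ang γ δ (d x) ↔ Y γ < Y δ) := by
    intro x
    have hc := cur_cont hH (hψ x) (hdom x)
    have hi := cur_inj (hdom x) ((hinj x).mono (sub x))
    obtain ⟨ρ, hρ, Y, hY⟩ := exists_order (hd0 x) hc hi
    have hpos : 0 < ‖cur H (ψ x) x (d x) - cur H (ψ x) x 0‖ := by
      rw [norm_pos_iff, sub_ne_zero]
      intro h
      exact (hd0 x).ne' (hi (right_mem_Icc.mpr (hd0 x).le) (left_mem_Icc.mpr (hd0 x).le) h)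
    refine ⟨min ρ (‖cur H (ψ x) x (d x) - cur H (ψ x) x 0‖ / 6), by positivity, ?_, Y, ?_⟩
    · have := min_le_right ρ (‖cur H (ψ x) x (d x) - cur H (ψ x) x 0‖ / 6)
      linarith
    · intro γ δ h1 h2 h3 h4 h5
      exact hY γ δ h1 h2 (fun u hu => (h3 u hu).trans_le (min_le_left _ _))
        (fun u hu => (h4 u hu).trans_le (min_le_left _ _)) h5
  choose ρ hρ hρ6 Y hY using hord
  set O : X → Set X := fun x => {z | ∀ u ∈ Icc 0 (d x), H z u ∈ range (ψ x) ∧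
    ‖cur H (ψ x) z u - cur H (ψ x) x u‖ < ρ x} with hO
  have cO : ∀ x, ∀ z ∈ O x, ContinuousOn (cur H (ψ x) z) (Icc 0 (d x)) :=
    fun x z hz => cur_cont hH (hψ x) (fun u hu => (hz u hu).1)
  have dO : ∀ x, ∀ z ∈ O x, ∀ w ∈ O x, adm z w → Disj (cur H (ψ x) z) (cur H (ψ x) w) (d x) :=
    fun x z hz w hw h => cur_disj (fun u hu => (hz u hu).1) (fun u hu => (hw u hu).1)
      (fun u hu v hv => hadm z w h u (sub x hu) v (sub x hv))
  have yO : ∀ x, ∀ z ∈ O x, ∀ w ∈ O x, adm z w →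
      (0 < ang (cur H (ψ x) z) (cur H (ψ x) w) (d x) ↔
        Y x (cur H (ψ x) z) < Y x (cur H (ψ x) w)) :=
    fun x z hz w hw h => hY x _ _ (cO x z hz) (cO x w hw) (fun u hu => (hz u hu).2)
      (fun u hu => (hw u hu).2) (dO x z hz w hw h)
  have nO : ∀ x, ∀ z ∈ O x, ∀ w ∈ O x, adm z w →
      ang (cur H (ψ x) z) (cur H (ψ x) w) (d x) ≠ 0 := by
    intro x z hz w hw h
    have m0 := left_mem_Icc.mpr (hd0 x).le
    have md := right_mem_Icc.mpr (hd0 x).le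
    obtain ⟨l, hl⟩ := exists_lift (hd0 x).le (cO x z hz) (cO x w hw) (dO x z hz w hw h)
    exact ang_ne_zero (hd0 x).le hl (quad_est (hρ6 x) (hz _ m0).2 (hz _ md).2 (hw _ m0).2 (hw _ md).2)
  refine ⟨O, fun x z w => 0 < ang (cur H (ψ x) z) (cur H (ψ x) w) (d x), ?_, ?_, ?_, ?_, ?_⟩
  · intro x
    exact cur_near hH (hψ x) (hdom x) (hρ x)
  · intro x z hz w hw h
    obtain ⟨l, hl⟩ := exists_lift (hd0 x).le (cO x z hz) (cO x w hw) (dO x z hz w hw h)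
    simp only
    rw [ang_swap (hd0 x).le hl]
    have := nO x z hz w hw h
    constructor
    · intro h1; linarith
    · intro h1; exact lt_of_le_of_ne (by linarith) this.symm
  · intro x a ha b hb c hc hab hbc hac
    simp only
    rw [yO x a ha b hb hab, yO x b hb c hc hbc, yO x a ha c hc hac]
    exact lt_trans
  · intro x z hz w hw h
    obtain ⟨r, hr, hr'⟩ := ang_stable (hd0 x).le (cO x z hz) (cO x w hw) (dO x z hz w hw h)
      (nO x z hz w hw h)
    have n1 := cur_near hH (hψ x) (fun u hu => (hz u hu).1) hr
    have n2 := cur_near hH (hψ x) (fun u hu => (hw u hu).1) hr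
    filter_upwards [n1.prod_mk n2] with p hp
    exact hr' _ _ (cur_cont hH (hψ x) (fun u hu => (hp.1 u hu).1))
      (cur_cont hH (hψ x) (fun u hu => (hp.2 u hu).1))
      (fun u hu => (hp.1 u hu).2) (fun u hu => (hp.2 u hu).2)
  · intro x x' y hy hy'
    have m0 := left_mem_Icc.mpr (hd0 x).le
    have m0' := left_mem_Icc.mpr (hd0 x').le
    obtain ⟨φ, hφ, hq, hW⟩ := hF (H y 0) (range (ψ x) ∩ range (ψ x'))
      ((hψ x).isOpen_range.inter (hψ x').isOpen_range) ⟨(hy 0 m0).1, (hy' 0 m0').1⟩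
    obtain ⟨e, he0, he1, he2⟩ := hsmall y φ hφ hq (min (d x) (d x')) (lt_min (hd0 x) (hd0 x'))
    obtain ⟨ε, h1⟩ := compare adm hH (hψ x) hφ (hW.trans inter_subset_left) he0
      (he1.trans (min_le_left _ _))
      (fun z z' h u hu v hv => hadm z z' h u (sub x hu) v (sub x hv))
      (fun u hu => (hy u hu).1) he2 ((hinj y).mono (sub x))
    obtain ⟨ε', h2⟩ := compare adm hH (hψ x') hφ (hW.trans inter_subset_right) he0
      (he1.trans (min_le_right _ _))
      (fun z z' h u hu v hv => hadm z z' h u (sub x' hu) v (sub x' hv))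
      (fun u hu => (hy' u hu).1) he2 ((hinj y).mono (sub x'))
    refine ⟨(ε ↔ ε'), ?_⟩
    filter_upwards [h1, h2] with p b1 b2
    intro h
    rw [b1 h, b2 h]
    tauto

end charts

lemma exists_chart {F : Type*} [TopologicalSpace F] (hF : IsSurface F) (q : F) (W : Set F)
    (hW : IsOpen W) (hq : q ∈ W) :
    ∃ ψ : ℂ → F, IsOpenEmbedding ψ ∧ q ∈ range ψ ∧ range ψ ⊆ W := by
  obtain ⟨U, V, hU, hqU, hV, ⟨h⟩⟩ := hF.2.2.2 q
  have ho : IsOpen (Set.image Subtype.val {v : V | (h.symm v : F) ∈ W}) := by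
    refine hV.isOpenMap_subtype_val _ ?_
    exact hW.preimage (continuous_subtype_val.comp h.symm.continuous)
  have hp : (h ⟨q, hqU⟩ : EuclideanSpace ℝ (Fin 2)) ∈
      Set.image Subtype.val {v : V | (h.symm v : F) ∈ W} :=
    ⟨h ⟨q, hqU⟩, by simpa using hq, rfl⟩
  obtain ⟨r, hr, hball⟩ := Metric.isOpen_iff.mp ho _ hp
  set p : EuclideanSpace ℝ (Fin 2) := (h ⟨q, hqU⟩ : EuclideanSpace ℝ (Fin 2)) with hpdef
  set B := OpenPartialHomeomorph.univBall (E := EuclideanSpace ℝ (Fin 2)) p r with hB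
  have hBe : IsOpenEmbedding B :=
    OpenPartialHomeomorph.isOpenEmbedding _ (OpenPartialHomeomorph.univBall_source p r)
  have hBm : ∀ x, B x ∈ Metric.ball p r := by
    intro x
    rw [← OpenPartialHomeomorph.univBall_target p hr]
    exact B.map_source (by rw [hB, OpenPartialHomeomorph.univBall_source]; trivial)
  set J := Complex.orthonormalBasisOneI.repr
  have hJ : IsOpenEmbedding (fun c : ℂ => B (J c)) :=
    hBe.comp J.toHomeomorph.isOpenEmbedding
  have hmem : ∀ c : ℂ, ∃ hv : B (J c) ∈ V, (h.symm ⟨B (J c), hv⟩ : F) ∈ W := by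
    intro c
    obtain ⟨v, hv, e⟩ := hball (hBm (J c))
    rw [← e]
    exact ⟨v.2, hv⟩
  set g : ℂ → V := fun c => ⟨B (J c), (hmem c).1⟩ with hg
  have hge : IsOpenEmbedding g := by
    refine Topology.IsOpenEmbedding.of_comp _ hV.isOpenEmbedding_subtypeVal ?_
    exact hJ
  refine ⟨fun c => (h.symm (g c) : F), ?_, ⟨0, ?_⟩, ?_⟩
  · exact hU.isOpenEmbedding_subtypeVal.comp (h.symm.isOpenEmbedding.comp hge)
  · have : g 0 = h ⟨q, hqU⟩ := by
      apply Subtype.ext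
      simp only [hg, map_zero, hB, OpenPartialHomeomorph.univBall_apply_zero, hpdef]
    simp [this]
  · rintro _ ⟨c, rfl⟩
    exact (hmem c).2

section sol
variable {w : ℕ → ℕ}

/-- the partial products. -/
def NN (w : ℕ → ℕ) (n : ℕ) : ℕ := ∏ i ∈ Finset.range n, w i

lemma NN_succ (n : ℕ) : NN w (n + 1) = NN w n * w n := Finset.prod_range_succ _ _

lemma NN_pos (hw : ∀ n, 1 < w n) (n : ℕ) : 0 < NN w n :=
  Finset.prod_pos (fun i _ => by have := hw i; omega)

lemma NN_ge (hw : ∀ n, 1 < w n) (n : ℕ) : n < NN w n := by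
  induction n with
  | zero => exact NN_pos hw 0
  | succ n ih =>
    rw [NN_succ]
    have := hw n
    nlinarith

lemma NN_dvd {n m : ℕ} (h : n ≤ m) : NN w n ∣ NN w m := by
  induction m, h using Nat.le_induction with
  | base => exact dvd_rfl
  | succ m _ ih => rw [NN_succ]; exact ih.mul_right _

/-- the one parameter subgroup. -/
noncomputable def ee (hw : ∀ n, 1 < w n) (t : ℝ) : Solenoid w :=
  ⟨fun n => Circle.exp (2 * Real.pi * t / NN w n), by
    intro n
    have h1 : (NN w n : ℝ) ≠ 0 := by exact_mod_cast (NN_pos hw n).ne'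
    have h2 : (w n : ℝ) ≠ 0 := by have := hw n; exact_mod_cast (by omega : w n ≠ 0)
    rw [← Circle.exp_natCast_mul, NN_succ]
    congr 1
    push_cast
    field_simp⟩

section sol2
variable (hw : ∀ n, 1 < w n)

lemma ee_apply (t : ℝ) (n : ℕ) : (ee hw t).1 n = Circle.exp (2 * Real.pi * t / NN w n) := rfl

lemma ee_add (s t : ℝ) : ee hw (s + t) = ee hw s * ee hw t := by
  apply Subtype.ext
  funext n
  change (ee hw (s + t)).1 n = (ee hw s).1 n * (ee hw t).1 n
  rw [ee_apply, ee_apply, ee_apply, ← Circle.exp_add]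
  congr 1
  ring

lemma ee_zero : ee hw 0 = 1 := by
  apply Subtype.ext
  funext n
  change (ee hw 0).1 n = 1
  rw [ee_apply]
  simp

lemma ee_nat (t : ℝ) (m : ℕ) : ee hw (m * t) = ee hw t ^ m := by
  induction m with
  | zero => simp [ee_zero]
  | succ m ih => rw [pow_succ, ← ih, ← ee_add]; congr 1; push_cast; ring

lemma ee_cont : Continuous (ee hw) := by
  refine Continuous.subtype_mk (continuous_pi fun n => ?_) _
  fun_prop

lemma ee_coord_eq_one {t : ℝ} {n : ℕ} (h : (ee hw t).1 n = 1) : ∃ m : ℤ, t = m * NN w n := by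
  rw [ee_apply, Circle.exp_eq_one] at h
  obtain ⟨m, hm⟩ := h
  refine ⟨m, ?_⟩
  have h1 : (NN w n : ℝ) ≠ 0 := by exact_mod_cast (NN_pos hw n).ne'
  have h2 := Real.pi_pos.ne'
  field_simp at hm
  linarith

lemma ee_coord_nat {m n : ℕ} (h : n ≤ m) (c : ℕ) : (ee hw (c * NN w m)).1 n = 1 := by
  rw [ee_apply, Circle.exp_eq_one]
  obtain ⟨k, hk⟩ := NN_dvd (w := w) h
  refine ⟨c * k, ?_⟩
  have h1 : (NN w n : ℝ) ≠ 0 := by exact_mod_cast (NN_pos hw n).ne'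
  rw [hk]
  push_cast
  field_simp

lemma ee_ne_one {t : ℝ} (ht : t ≠ 0) : ee hw t ≠ 1 := by
  intro h
  obtain ⟨n, hn⟩ := exists_nat_gt |t|
  obtain ⟨m, hm⟩ := ee_coord_eq_one hw (t := t) (n := n) (by rw [h]; rfl)
  have hm0 : m ≠ 0 := by rintro rfl; simp at hm; exact ht hm
  have h1 : (1 : ℝ) ≤ |(m : ℝ)| := by exact_mod_cast Int.one_le_abs hm0
  have h2 : (n : ℝ) < NN w n := by exact_mod_cast NN_ge hw n
  have h3 : |t| = |(m : ℝ)| * NN w n := by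
    conv_lhs => rw [hm]
    rw [abs_mul, Nat.abs_cast]
  have : (0:ℝ) ≤ n := Nat.cast_nonneg n
  nlinarith

lemma ee_tendsto (c : ℕ) : Tendsto (fun m => ee hw (c * NN w m)) atTop (𝓝 1) := by
  rw [tendsto_subtype_rng, tendsto_pi_nhds]
  intro n
  refine tendsto_const_nhds.congr' ?_
  filter_upwards [eventually_ge_atTop n] with m hm
  exact (ee_coord_nat hw hm c).symm

end sol2

lemma coord_mono {x y : Solenoid w} {n m : ℕ} (hnm : n ≤ m) (h : x.1 m = y.1 m) :
    x.1 n = y.1 n := by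
  induction m, hnm using Nat.le_induction with
  | base => exact h
  | succ m _ ih => 
    apply ih
    rw [x.2 m, y.2 m, h]

instance sol_compact : CompactSpace (Solenoid w) := by
  have : IsClosed (solenoidSubgroup w : Set (ℕ → Circle)) := by
    have e : (solenoidSubgroup w : Set (ℕ → Circle)) = ⋂ n, {x | x n = x (n + 1) ^ w n} := by
      ext x
      simp only [mem_iInter]
      rfl
    rw [e]
    exact isClosed_iInter (fun n => isClosed_eq (by fun_prop) (by fun_prop))
  exact isCompact_iff_compactSpace.mp this.isCompact

lemma coord_cont (n : ℕ) : Continuous (fun x : Solenoid w => x.1 n) :=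
  (continuous_apply n).comp continuous_subtype_val

lemma lebesgue {V : Solenoid w → Set (Solenoid w)} (hV : ∀ y, V y ∈ 𝓝 y) :
    ∃ n, ∀ y' : Solenoid w, ∃ y, ∀ z : Solenoid w, z.1 n = y'.1 n → z ∈ V y := by
  obtain ⟨E, hE, hE'⟩ := lebesgue_number_lemma (isCompact_univ (X := Solenoid w))
    (U := fun y => interior (V y)) (fun y => isOpen_interior)
    (fun y _ => mem_iUnion.mpr ⟨y, mem_interior_iff_mem_nhds.mpr (hV y)⟩)
  have hcl : ∀ n, IsClosed {p : Solenoid w × Solenoid w | p.2.1 n = p.1.1 n} := fun n =>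
    isClosed_eq ((coord_cont n).comp continuous_snd) ((coord_cont n).comp continuous_fst)
  obtain ⟨n, hn⟩ := exists_subset_nhds_of_isCompact'
    (V := fun n : ℕ => {p : Solenoid w × Solenoid w | p.2.1 n = p.1.1 n})
    (by
      intro a b
      exact ⟨max a b, fun p hp => coord_mono (le_max_left a b) hp,
        fun p hp => coord_mono (le_max_right a b) hp⟩)
    (fun n => (hcl n).isCompact) hcl (U := E) (by
      rintro ⟨x, y⟩ h
      have : y = x := by
        apply Subtype.ext
        funext n
        exact mem_iInter.mp h n
      rw [this]
      exact nhds_le_uniformity x hE)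
  refine ⟨n, fun y' => ?_⟩
  obtain ⟨y, hy⟩ := hE' y' (mem_univ _)
  exact ⟨y, fun z hz => interior_subset (hy (hn (show (y', z) ∈ _ from hz)))⟩

end sol

section fin
variable {w : ℕ → ℕ}

/-- same first coordinate, but distinct. -/
def Adm (z z' : Solenoid w) : Prop := z.1 0 = z'.1 0 ∧ z ≠ z'

lemma adm_mul {n : ℕ} {k k' : Solenoid w} (x : Solenoid w) (hk : k.1 n = 1) (hk' : k'.1 n = 1)
    (h : k ≠ k') : Adm (x * k) (x * k') := by
  refine ⟨?_, fun e => h (mul_left_cancel e)⟩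
  change x.1 0 * k.1 0 = x.1 0 * k'.1 0
  rw [coord_mono (Nat.zero_le n) (hk.trans hk'.symm)]

lemma adm_of {n : ℕ} {k k' : Solenoid w} (hk : k.1 n = 1) (hk' : k'.1 n = 1)
    (h : k ≠ k') : Adm k k' :=
  ⟨coord_mono (Nat.zero_le n) (hk.trans hk'.symm), h⟩

/-- order argument on the coset. -/
lemma no_order (hw : ∀ n, 1 < w n) (n : ℕ) (P : Solenoid w → Solenoid w → Prop)
    (h2 : ∀ k k', k.1 n = 1 → k'.1 n = 1 → k ≠ k' → (P k k' ↔ ¬ P k' k))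
    (h3 : ∀ a b c, a.1 n = 1 → b.1 n = 1 → c.1 n = 1 → a ≠ b → b ≠ c → a ≠ c →
      P a b → P b c → P a c)
    (h4 : ∀ k k', k.1 n = 1 → k'.1 n = 1 → k ≠ k' →
      ∀ᶠ p in 𝓝 k ×ˢ 𝓝 k', (P p.1 p.2 ↔ P k k'))
    (h5 : ∀ k k', k.1 n = 1 → k'.1 n = 1 → k ≠ k' →
      (P (ee hw (2 * NN w n) * k) (ee hw (2 * NN w n) * k') ↔ P k k')) :
    ¬ P 1 (ee hw (2 * NN w n)) := by
  intro h
  have hN : (0:ℝ) < NN w n := by exact_mod_cast NN_pos hw n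
  set U := ee hw (2 * NN w n) with hU
  have hpow : ∀ j : ℕ, U ^ j = ee hw ((j * 2 : ℕ) * NN w n) := by
    intro j
    rw [hU, ← ee_nat]
    congr 1
    push_cast
    ring
  have hc : ∀ j : ℕ, (U ^ j).1 n = 1 := by
    intro j
    rw [hpow]
    exact ee_coord_nat hw le_rfl _
  have hne1 : ∀ j : ℕ, 0 < j → U ^ j ≠ 1 := by
    intro j hj
    rw [hpow]
    apply ee_ne_one
    have : (0:ℝ) < ((j * 2 : ℕ) : ℝ) := by exact_mod_cast (by omega)
    positivity
  have hne : ∀ i j : ℕ, i < j → U ^ i ≠ U ^ j := by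
    intro i j hij e
    apply hne1 (j - i) (by omega)
    have : U ^ j = U ^ i * U ^ (j - i) := by rw [← pow_add]; congr 1; omega
    rw [this] at e
    exact (mul_eq_left.mp e.symm)
  have hstep : ∀ j : ℕ, P (U ^ j) (U ^ (j + 1)) := by
    intro j
    induction j with
    | zero => simpa using h
    | succ j ih =>
      rw [pow_succ', pow_succ' U (j + 1)]
      exact (h5 _ _ (hc j) (hc (j+1)) (hne _ _ (Nat.lt_succ_self j))).mpr ih
  have hlong : ∀ j : ℕ, P (U ^ 1) (U ^ (j + 2)) := by
    intro j
    induction j with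
    | zero => exact hstep 1
    | succ j ih =>
      exact h3 _ _ _ (hc _) (hc _) (hc _) (hne _ _ (by omega)) (hne _ _ (by omega))
        (hne _ _ (by omega)) ih (hstep (j + 2))
  have ht : Tendsto (fun m => (U, ee hw ((2:ℕ) * NN w m))) atTop (𝓝 U ×ˢ 𝓝 1) :=
    tendsto_const_nhds.prodMk (ee_tendsto hw 2)
  have hU1 : U.1 n = 1 := by simpa using hc 1
  have hU2 : U ≠ 1 := by simpa using hne1 1 one_pos
  have ev := ht.eventually (h4 U 1 hU1 rfl hU2)
  obtain ⟨m, hm, hm'⟩ := (ev.and (eventually_ge_atTop (n + 1))).exists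
  obtain ⟨c, hcm⟩ := NN_dvd (w := w) ((Nat.le_succ n).trans hm')
  have hc2 : 2 ≤ c := by
    obtain ⟨e, he⟩ := NN_dvd (w := w) hm'
    rw [NN_succ, hcm, mul_assoc] at he
    have he' := Nat.eq_of_mul_eq_mul_left (NN_pos hw n) he
    have hcpos : 0 < c := by
      rcases Nat.eq_zero_or_pos c with h0 | h0
      · rw [h0, mul_zero] at hcm
        exact absurd hcm (NN_pos hw m).ne'
      · exact h0
    have h1 := hw n
    have : 0 < e := by
      rcases Nat.eq_zero_or_pos e with h0 | h0
      · rw [h0, mul_zero] at he'; omega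
      · exact h0
    nlinarith
  have e1 : ee hw ((2:ℕ) * NN w m) = U ^ c := by
    rw [hpow, hcm]
    congr 1
    push_cast
    ring
  simp only [e1] at hm
  obtain ⟨j, rfl⟩ : ∃ j, c = j + 2 := ⟨c - 2, by omega⟩
  have hfin : P U 1 := hm.mp (by simpa using hlong j)
  exact (h2 U 1 hU1 rfl hU2).mp hfin h

theorem no_local (hw : ∀ n, 1 < w n) (O : Solenoid w → Set (Solenoid w))
    (R : Solenoid w → Solenoid w → Solenoid w → Prop)
    (h1 : ∀ x, O x ∈ 𝓝 x)
    (h2 : ∀ x, ∀ z ∈ O x, ∀ z' ∈ O x, Adm z z' → (R x z z' ↔ ¬ R x z' z))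
    (h3 : ∀ x, ∀ a ∈ O x, ∀ b ∈ O x, ∀ c ∈ O x, Adm a b → Adm b c → Adm a c →
        R x a b → R x b c → R x a c)
    (h4 : ∀ x, ∀ z ∈ O x, ∀ z' ∈ O x, Adm z z' →
        ∀ᶠ p in 𝓝 z ×ˢ 𝓝 z', (R x p.1 p.2 ↔ R x z z'))
    (h5 : ∀ x x' y, y ∈ O x → y ∈ O x' → ∃ ε : Prop, ∀ᶠ p in 𝓝 y ×ˢ 𝓝 y, Adm p.1 p.2 →
        (R x p.1 p.2 ↔ (R x' p.1 p.2 ↔ ε))) : False := by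
  -- closed shrinking
  have hC : ∀ x, ∃ C ∈ 𝓝 x, IsClosed C ∧ C ⊆ interior (O x) := fun x =>
    exists_mem_nhds_isClosed_subset (interior_mem_nhds.mpr (h1 x))
  choose C hCn hCc hCO using hC
  obtain ⟨T, -, hT⟩ := (isCompact_univ (X := Solenoid w)).elim_nhds_subcover C (fun x _ => hCn x)
  -- good neighbourhoods
  have hV : ∀ y, ∃ V ∈ 𝓝 y, (∀ i ∈ T, y ∉ C i → ∀ z ∈ V, z ∉ C i) ∧
      (∀ i ∈ T, y ∈ C i → ∀ z ∈ V, z ∈ O i) ∧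
      (∀ i ∈ T, ∀ j ∈ T, y ∈ C i → y ∈ C j → ∃ ε : Prop, ∀ z ∈ V, ∀ z' ∈ V, Adm z z' →
        (R i z z' ↔ (R j z z' ↔ ε))) := by
    intro y
    have a1 : ∀ᶠ V in (𝓝 y).smallSets, ∀ i ∈ T, y ∉ C i → ∀ z ∈ V, z ∉ C i := by
      rw [eventually_all_finset]
      intro i _
      by_cases hy : y ∈ C i
      · exact Eventually.of_forall (fun _ h => absurd hy h)
      · have : ∀ᶠ z in 𝓝 y, z ∉ C i := (hCc i).isOpen_compl.mem_nhds hy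
        filter_upwards [this.smallSets] with V hV _ using hV
    have a2 : ∀ᶠ V in (𝓝 y).smallSets, ∀ i ∈ T, y ∈ C i → ∀ z ∈ V, z ∈ O i := by
      rw [eventually_all_finset]
      intro i _
      by_cases hy : y ∈ C i
      · have : ∀ᶠ z in 𝓝 y, z ∈ O i := mem_interior_iff_mem_nhds.mp (hCO i hy)
        filter_upwards [this.smallSets] with V hV _ using hV
      · exact Eventually.of_forall (fun _ h => absurd h hy)
    have a3 : ∀ᶠ V in (𝓝 y).smallSets, ∀ i ∈ T, ∀ j ∈ T, y ∈ C i → y ∈ C j →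
        ∃ ε : Prop, ∀ z ∈ V, ∀ z' ∈ V, Adm z z' → (R i z z' ↔ (R j z z' ↔ ε)) := by
      rw [eventually_all_finset]
      intro i _
      rw [eventually_all_finset]
      intro j _
      by_cases hi : y ∈ C i
      · by_cases hj : y ∈ C j
        · obtain ⟨ε, hε⟩ := h5 i j y (interior_subset (hCO i hi)) (interior_subset (hCO j hj))
          obtain ⟨t, ht, ht'⟩ := (eventually_prod_self_iff
            (r := fun a b => Adm a b → (R i a b ↔ (R j a b ↔ ε)))).mp hε
          filter_upwards [eventually_smallSets.mpr ⟨t, ht, fun s hs => hs⟩] with V hV _ _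
          exact ⟨ε, fun z hz z' hz' => ht' z (hV hz) z' (hV hz')⟩
        · exact Eventually.of_forall (fun _ _ h => absurd h hj)
      · exact Eventually.of_forall (fun _ h => absurd h hi)
    obtain ⟨V, hVn, hV⟩ := eventually_smallSets.mp (a1.and (a2.and a3))
    obtain ⟨b1, b2, b3⟩ := hV V Subset.rfl
    exact ⟨V, hVn, b1, b2, b3⟩
  choose V hVn hV1 hV2 hV3 using hV
  obtain ⟨n, hn⟩ := lebesgue hVn
  -- charts meeting a coset
  set meet : Solenoid w → Solenoid w → Prop := fun y i => i ∈ T ∧ ∃ z ∈ C i, z.1 n = y.1 n with hmeet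
  have mcoset : ∀ y y' i, y.1 n = y'.1 n → meet y i → meet y' i := by
    rintro y y' i h ⟨hi, z, hz, e⟩
    exact ⟨hi, z, hz, e.trans h⟩
  have A : ∀ y, ∃ i, meet y i := by
    intro y
    obtain ⟨i, hi, hy⟩ := mem_iUnion₂.mp (hT (mem_univ y))
    exact ⟨i, hi, y, hy, rfl⟩
  have B : ∀ y i, meet y i → ∀ z, z.1 n = y.1 n → z ∈ O i := by
    rintro y i ⟨hi, z0, hz0, e0⟩ z hz
    obtain ⟨y0, hy0⟩ := hn y
    have hyC : y0 ∈ C i := by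
      by_contra h
      exact hV1 y0 i hi h z0 (hy0 z0 e0) hz0
    exact hV2 y0 i hi hyC z (hy0 z hz)
  have Cc : ∀ y i j, meet y i → meet y j → ∃ ε : Prop, ∀ z z', z.1 n = y.1 n → z'.1 n = y.1 n →
      Adm z z' → (R i z z' ↔ (R j z z' ↔ ε)) := by
    rintro y i j ⟨hi, z0, hz0, e0⟩ ⟨hj, z1, hz1, e1⟩
    obtain ⟨y0, hy0⟩ := hn y
    have hyi : y0 ∈ C i := by
      by_contra h
      exact hV1 y0 i hi h z0 (hy0 z0 e0) hz0
    have hyj : y0 ∈ C j := by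
      by_contra h
      exact hV1 y0 j hj h z1 (hy0 z1 e1) hz1
    obtain ⟨ε, hε⟩ := hV3 y0 i hi j hj hyi hyj
    exact ⟨ε, fun z z' hz hz' => hε z (hy0 z hz) z' (hy0 z' hz')⟩
  have D : ∀ y, ∀ᶠ y' in 𝓝 y, ∀ i ∈ T, meet y' i → meet y i := by
    intro y
    rw [eventually_all_finset]
    intro i hi
    by_cases hy : meet y i
    · exact Eventually.of_forall (fun _ _ => hy)
    · have hcl : IsClosed {y' : Solenoid w | y'.1 n ∈ Set.image (fun z : Solenoid w => z.1 n) (C i)} :=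
        (((hCc i).isCompact).image (coord_cont n)).isClosed.preimage (coord_cont n)
      have : ∀ᶠ y' in 𝓝 y, y' ∉ {y' : Solenoid w | y'.1 n ∈ Set.image (fun z : Solenoid w => z.1 n) (C i)} := by
        refine hcl.isOpen_compl.mem_nhds ?_
        rintro ⟨z, hz, e⟩
        exact hy ⟨hi, z, hz, e⟩
      filter_upwards [this] with y' hy' hm
      obtain ⟨-, z, hz, e⟩ := hm
      exact absurd ⟨z, hz, e⟩ hy'
  have key : ∀ k1 k1' k2 k2' : Solenoid w, k1.1 n = 1 → k1'.1 n = 1 → k2.1 n = 1 → k2'.1 n = 1 →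
      k1 ≠ k1' → k2 ≠ k2' → ∀ s t : ℝ, ∀ i j, meet (ee hw s) i → meet (ee hw t) j →
      ((R i (ee hw s * k1) (ee hw s * k1') ↔ R i (ee hw s * k2) (ee hw s * k2')) ↔
       (R j (ee hw t * k1) (ee hw t * k1') ↔ R j (ee hw t * k2) (ee hw t * k2'))) := by
    intro k1 k1' k2 k2' hk1 hk1' hk2 hk2' hne1 hne2
    have cos : ∀ (x k : Solenoid w), k.1 n = 1 → (x * k).1 n = x.1 n := by
      intro x k hk
      change x.1 n * k.1 n = x.1 n
      rw [hk, mul_one]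
    set S : Solenoid w → ℝ → Prop := fun i t =>
      (R i (ee hw t * k1) (ee hw t * k1') ↔ R i (ee hw t * k2) (ee hw t * k2')) with hS
    have indep : ∀ t i j, meet (ee hw t) i → meet (ee hw t) j → (S i t ↔ S j t) := by
      intro t i j hi hj
      obtain ⟨ε, hε⟩ := Cc _ i j hi hj
      have e1 := hε _ _ (cos (ee hw t) k1 hk1) (cos _ k1' hk1') (adm_mul _ hk1 hk1' hne1)
      have e2 := hε _ _ (cos (ee hw t) k2 hk2) (cos _ k2' hk2') (adm_mul _ hk2 hk2' hne2)
      simp only [hS]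
      rw [e1, e2]
      tauto
    set s : ℝ → Prop := fun t => ∃ i, meet (ee hw t) i ∧ S i t with hs
    have s_iff : ∀ t i, meet (ee hw t) i → (s t ↔ S i t) := by
      intro t i hi
      constructor
      · rintro ⟨j, hj, h⟩
        exact (indep t i j hi hj).mpr h
      · intro h
        exact ⟨i, hi, h⟩
    have stab : ∀ k k' : Solenoid w, k.1 n = 1 → k'.1 n = 1 → k ≠ k' → ∀ t0 i, meet (ee hw t0) i →
        ∀ᶠ t in 𝓝 t0, (R i (ee hw t * k) (ee hw t * k') ↔ R i (ee hw t0 * k) (ee hw t0 * k')) := by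
      intro k k' hk hk' hne t0 i hi
      have c1 : Tendsto (fun t => ee hw t * k) (𝓝 t0) (𝓝 (ee hw t0 * k)) :=
        ((ee_cont hw).mul continuous_const).tendsto t0
      have c2 : Tendsto (fun t => ee hw t * k') (𝓝 t0) (𝓝 (ee hw t0 * k')) :=
        ((ee_cont hw).mul continuous_const).tendsto t0
      exact (c1.prodMk c2).eventually (h4 i _ (B _ i hi _ (cos _ k hk)) _ (B _ i hi _ (cos _ k' hk'))
        (adm_mul _ hk hk' hne))
    have hloc : IsLocallyConstant s := by
      rw [IsLocallyConstant.iff_eventually_eq]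
      intro t0
      have d1 : ∀ᶠ t in 𝓝 t0, ∀ i ∈ T, meet (ee hw t) i → meet (ee hw t0) i :=
        (ee_cont hw).continuousAt.eventually (D (ee hw t0))
      have d2 : ∀ᶠ t in 𝓝 t0, ∀ i ∈ T, meet (ee hw t0) i → (S i t ↔ S i t0) := by
        rw [eventually_all_finset]
        intro i _
        by_cases hi : meet (ee hw t0) i
        · filter_upwards [stab k1 k1' hk1 hk1' hne1 t0 i hi, stab k2 k2' hk2 hk2' hne2 t0 i hi]
            with t b1 b2 _
          simp only [hS]
          rw [b1, b2]
        · exact Eventually.of_forall (fun _ h => absurd h hi)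
      filter_upwards [d1, d2] with t b1 b2
      obtain ⟨i, hi⟩ := A (ee hw t)
      have hi0 := b1 i hi.1 hi
      exact propext ((s_iff t i hi).trans ((b2 i hi.1 hi0).trans (s_iff t0 i hi0).symm))
    intro s' t i j hi hj
    have := hloc.apply_eq_of_preconnectedSpace s' t
    exact (s_iff s' i hi).symm.trans ((iff_of_eq this).trans (s_iff t j hj))
  -- the order on the coset of the identity
  obtain ⟨i, hi⟩ := A 1
  have hN : (0:ℝ) < NN w n := by exact_mod_cast NN_pos hw n
  set τ := ee hw (NN w n) with hτ
  have hτ1 : τ.1 n = 1 := by simpa using ee_coord_nat hw (le_refl n) 1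
  have hτne : τ ≠ 1 := ee_ne_one hw hN.ne'
  have hττ : ee hw (2 * NN w n) = τ * τ := by rw [two_mul, ee_add]
  have hOi : ∀ k : Solenoid w, k.1 n = 1 → k ∈ O i := fun k hk => B 1 i hi k hk
  have hmul : ∀ k : Solenoid w, k.1 n = 1 → (τ * k).1 n = 1 := by
    intro k hk
    change τ.1 n * k.1 n = 1
    rw [hτ1, hk, mul_one]
  have hi0 : meet (ee hw 0) i := by rw [ee_zero]; exact hi
  have hiτ : meet τ i := mcoset 1 _ i hτ1.symm hi
  have inv2 : ∀ k k' : Solenoid w, k.1 n = 1 → k'.1 n = 1 → k ≠ k' →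
      (R i (ee hw (2 * NN w n) * k) (ee hw (2 * NN w n) * k') ↔ R i k k') := by
    intro k k' hk hk' hne
    have q1 := key k k' (τ * k) (τ * k') hk hk' (hmul k hk) (hmul k' hk') hne
      (fun e => hne (mul_left_cancel e)) 0 (NN w n) i i hi0 hiτ
    rw [ee_zero, ← hτ] at q1
    simp only [one_mul] at q1
    rw [hττ, mul_assoc, mul_assoc]
    tauto
  have f2 : ∀ k k' : Solenoid w, k.1 n = 1 → k'.1 n = 1 → k ≠ k' → (R i k k' ↔ ¬ R i k' k) :=
    fun k k' hk hk' hne => h2 i k (hOi k hk) k' (hOi k' hk') (adm_of hk hk' hne)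
  have f3 : ∀ a b c : Solenoid w, a.1 n = 1 → b.1 n = 1 → c.1 n = 1 → a ≠ b → b ≠ c → a ≠ c →
      R i a b → R i b c → R i a c := fun a b c ha hb hc hab hbc hac =>
    h3 i a (hOi a ha) b (hOi b hb) c (hOi c hc) (adm_of ha hb hab) (adm_of hb hc hbc)
      (adm_of ha hc hac)
  have f4 : ∀ k k' : Solenoid w, k.1 n = 1 → k'.1 n = 1 → k ≠ k' →
      ∀ᶠ p in 𝓝 k ×ˢ 𝓝 k', (R i p.1 p.2 ↔ R i k k') := fun k k' hk hk' hne =>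
    h4 i k (hOi k hk) k' (hOi k' hk') (adm_of hk hk' hne)
  have n1 := no_order hw n (fun a b => R i a b) f2 f3 f4 inv2
  have n2 := no_order hw n (fun a b => R i b a) (fun k k' hk hk' hne => f2 k' k hk' hk hne.symm)
    (fun a b c ha hb hc hab hbc hac r1 r2 => f3 c b a hc hb ha hbc.symm hab.symm hac.symm r2 r1)
    (fun k k' hk hk' hne => by
      have := f4 k' k hk' hk hne.symm
      rw [prod_comm, eventually_map] at this
      exact this)
    (fun k k' hk hk' hne => inv2 k' k hk' hk hne.symm)
  have hU1 : (ee hw (2 * NN w n)).1 n = 1 := by rw [hττ]; exact hmul τ hτ1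
  have hUne : ee hw (2 * NN w n) ≠ 1 := ee_ne_one hw (by positivity)
  exact n1 ((f2 1 _ rfl hU1 hUne.symm).mpr n2)

theorem main (hw : ∀ n, 1 < w n) {F : Type*} [TopologicalSpace F] (hF : IsSurface F)
    (f : Solenoid w → F) (hf : IsEmbedding f) : False := by
  have hsep : ∀ u ∈ Icc (0:ℝ) (1/2), ∀ v ∈ Icc (0:ℝ) (1/2), ∀ z z' : Solenoid w,
      z.1 0 = z'.1 0 → z * ee hw u = z' * ee hw v → u = v := by
    intro u hu v hv z z' h e
    have e0 : z.1 0 * (ee hw u).1 0 = z'.1 0 * (ee hw v).1 0 :=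
      congrArg (fun x : Solenoid w => x.1 0) e
    rw [h] at e0
    have e1 := mul_left_cancel e0
    have e2 : ee hw u = ee hw (u - v) * ee hw v := by rw [← ee_add]; congr 1; ring
    have e3 : (ee hw u).1 0 = (ee hw (u - v)).1 0 * (ee hw v).1 0 :=
      congrArg (fun x : Solenoid w => x.1 0) e2
    rw [e1] at e3
    obtain ⟨m, hm⟩ := ee_coord_eq_one hw (right_eq_mul.mp e3)
    have hN : NN w 0 = 1 := rfl
    rw [hN] at hm
    simp only [Nat.cast_one, mul_one] at hm
    have b1 : (m : ℝ) < 1 := by linarith [hu.2, hv.1]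
    have b2 : (-1 : ℝ) < m := by linarith [hu.1, hv.2]
    have c1 : m < 1 := by exact_mod_cast b1
    have c2 : -1 < m := by exact_mod_cast b2
    have : m = 0 := by omega
    rw [this] at hm
    simp only [Int.cast_zero] at hm
    linarith
  obtain ⟨O, R, h1, h2, h3, h4, h5⟩ := local_prop (X := Solenoid w) (F := F)
    (H := fun z u => f (z * ee hw u)) Adm
    (hf.continuous.comp (continuous_fst.mul ((ee_cont hw).comp continuous_snd)))
    (fun x u hu v hv e => hsep u hu v hv x x rfl (hf.injective e))
    (by
      intro z z' h u hu v hv e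
      have e1 := hf.injective e
      have := hsep u hu v hv z z' h.1 e1
      rw [this] at e1
      exact h.2 (mul_right_cancel e1))
    (exists_chart hF)
  exact no_local hw O R h1 h2 h3 h4 h5

end fin

end SolenoidAux

/-- **No solenoid embeds into a surface.** -/
theorem no_embedding_of_solenoid_into_surface
    (w : ℕ → ℕ) (hw : ∀ n, 1 < w n)
    (F : Type*) [TopologicalSpace F] (hF : IsSurface F) :
    ¬ ∃ f : Solenoid w → F, IsEmbedding f := by
  rintro ⟨f, hf⟩
  exact SolenoidAux.main hw hF f hf
end

section
/- No solenoid is planar: for any sequence of integers w₁, w₂, … with each wₙ > 1, there is no topological embedding of the solenoid Θ of type (w₁, w₂, …) into the plane ℝ². -/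
open Topology

set_option linter.unusedSectionVars false

section Eil

variable {X : Type*} [TopologicalSpace X] [CompactSpace X] [T2Space X]

lemma sol_interval_induction {P : ℝ → Prop} {a b : ℝ} (hab : a ≤ b) (ha : P a)
    (h : ∀ x, ∃ ε > 0, ∀ y y', |y - x| < ε → |y' - x| < ε → y ≤ y' → P y → P y') : P b := by
  choose ε hε h using h
  obtain ⟨t, t0, tm, ⟨m, hm⟩, ht⟩ := exists_monotone_Icc_subset_open_cover_Icc hab
    (c := fun x : ℝ => {y : Set.Icc a b | |(y : ℝ) - x| < ε x})
    (fun x => isOpen_lt (by fun_prop) continuous_const)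
    (fun y _ => Set.mem_iUnion.2 ⟨y, by simpa using hε y⟩)
  have key : ∀ n, P (t n) := by
    intro n
    induction n with
    | zero => rwa [t0]
    | succ k ih =>
      obtain ⟨i, hi⟩ := ht k
      have h1 := hi (Set.left_mem_Icc.2 (tm k.le_succ))
      have h2 := hi (Set.right_mem_Icc.2 (tm k.le_succ))
      exact h i _ _ h1 h2 (tm k.le_succ) ih
  have := key m
  rwa [hm m le_rfl] at this

lemma sol_bdd (g : C(X, ℝ)) : ∃ R > 0, ∀ p, |g p| < R := by
  obtain ⟨C, hC⟩ := (isCompact_range g.continuous).isBounded.exists_norm_le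
  refine ⟨|C| + 1, by positivity, fun p => ?_⟩
  have := hC (g p) ⟨p, rfl⟩
  rw [Real.norm_eq_abs] at this
  linarith [le_abs_self C]

lemma sol_tietze {s : Set X} (hs : IsClosed s) {h : X → ℂ} (hc : ContinuousOn h s) :
    ∃ H : C(X, ℂ), ∀ p ∈ s, H p = h p := by
  obtain ⟨H, hH⟩ := ContinuousMap.exists_restrict_eq hs ⟨s.domRestrict h, hc.domRestrict⟩
  exact ⟨H, fun p hp => congrArg (fun k => k ⟨p, hp⟩) hH⟩

lemma sol_thick (g : C(X, ℝ)) {B U : Set X} (hB : IsClosed B) (hU : IsOpen U) (y : ℝ)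
    (h : ∀ p ∈ B, g p = y → p ∈ U) : ∃ ε > 0, ∀ p ∈ B, |g p - y| < ε → p ∈ U := by
  have hc : IsClosed (g '' (B \ U)) := ((hB.sdiff hU).isCompact.image g.continuous).isClosed
  have hy : y ∈ (g '' (B \ U))ᶜ := by
    rintro ⟨p, ⟨hp, hpU⟩, e⟩
    exact hpU (h p hp e)
  obtain ⟨ε, hε, hb⟩ := Metric.isOpen_iff.1 hc.isOpen_compl y hy
  refine ⟨ε, hε, fun p hp hpe => ?_⟩
  by_contra hpU
  exact hb (show g p ∈ Metric.ball y ε by simpa [Real.dist_eq] using hpe) ⟨p, ⟨hp, hpU⟩, rfl⟩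

def SolExpOn (f : X → ℂ) (s : Set X) : Prop := ∃ h : C(X, ℂ), ∀ p ∈ s, f p = Complex.exp (h p)

lemma sol_expOn_thick (f : C(X, ℂ)) (g : C(X, ℝ)) {B : Set X} (hB : IsClosed B) (y : ℝ)
    (h : SolExpOn f {p | p ∈ B ∧ g p = y}) :
    ∃ ε > 0, SolExpOn f {p | p ∈ B ∧ |g p - y| ≤ ε} := by
  obtain ⟨h, hh⟩ := h
  have hFc : Continuous (fun p => f p * Complex.exp (-(h p))) := by fun_prop
  obtain ⟨ε, hε, hU⟩ := sol_thick g hB (Complex.isOpen_slitPlane.preimage hFc) y (by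
    intro p hp hy
    simp only [Set.mem_preimage]
    rw [hh p ⟨hp, hy⟩, ← Complex.exp_add]
    simp)
  have hcl : IsClosed {p | p ∈ B ∧ |g p - y| ≤ ε / 2} :=
    hB.inter (isClosed_le (f := fun p => |g p - y|) (by fun_prop) continuous_const)
  have hsl : ∀ p ∈ {p | p ∈ B ∧ |g p - y| ≤ ε / 2},
      f p * Complex.exp (-(h p)) ∈ Complex.slitPlane :=
    fun p hp => hU p hp.1 (lt_of_le_of_lt hp.2 (by linarith))
  obtain ⟨H, hH⟩ := sol_tietze hcl
    (h := fun p => h p + Complex.log (f p * Complex.exp (-(h p))))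
    (h.continuous.continuousOn.add (hFc.continuousOn.clog hsl))
  refine ⟨ε / 2, by positivity, H, fun p hp => ?_⟩
  rw [hH p hp, Complex.exp_add, Complex.exp_log (Complex.slitPlane_ne_zero (hsl p hp)),
    mul_left_comm, ← Complex.exp_add]
  simp

lemma sol_glue (h₁ h₂ : C(X, ℂ)) (g : C(X, ℝ)) {B : Set X} (hB : IsClosed B) (y : ℝ)
    (h : ∀ p ∈ B, g p = y → h₁ p = h₂ p) :
    ∃ H : C(X, ℂ), (∀ p ∈ B, g p ≤ y → H p = h₁ p) ∧ (∀ p ∈ B, y ≤ g p → H p = h₂ p) := by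
  have hc : Continuous (fun p : B => if g p ≤ y then h₁ p else h₂ p) :=
    Continuous.if_le (by fun_prop) (by fun_prop) (by fun_prop) (by fun_prop)
      (fun p hp => h p p.2 hp)
  obtain ⟨H, hH⟩ := ContinuousMap.exists_restrict_eq hB ⟨_, hc⟩
  have hH' : ∀ p (hp : p ∈ B), H p = if g p ≤ y then h₁ p else h₂ p :=
    fun p hp => congrArg (fun k => k ⟨p, hp⟩) hH
  refine ⟨H, fun p hp hy => by rw [hH' p hp, if_pos hy], fun p hp hy => ?_⟩
  rw [hH' p hp]
  split_ifs with h1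
  · exact h p hp (le_antisymm h1 hy)
  · rfl

lemma sol_line (f : C(X, ℂ)) (hf : ∀ p, f p ≠ 0) (g₁ g₂ : C(X, ℝ))
    (hinj : ∀ p q, g₁ p = g₁ q → g₂ p = g₂ q → p = q) (x : ℝ) :
    SolExpOn f {p | g₁ p = x} := by
  have hB : IsClosed {p | g₁ p = x} := isClosed_eq (by fun_prop) continuous_const
  obtain ⟨R, hR0, hR⟩ := sol_bdd g₂
  have key : SolExpOn f {p | g₁ p = x ∧ g₂ p ≤ R} := by
    refine sol_interval_induction (P := fun y => SolExpOn f {p | g₁ p = x ∧ g₂ p ≤ y})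
      (a := -R) (by linarith) ⟨0, fun p hp => ?_⟩ (fun y₀ => ?_)
    · exact absurd hp.2 (not_le.2 (abs_lt.1 (hR p)).1)
    · have h0 : SolExpOn f {p | p ∈ {p | g₁ p = x} ∧ g₂ p = y₀} := by
        by_cases hp : ∃ p, g₁ p = x ∧ g₂ p = y₀
        · obtain ⟨p, hp1, hp2⟩ := hp
          refine ⟨ContinuousMap.const X (Complex.log (f p)), fun q hq => ?_⟩
          obtain rfl : q = p := hinj q p (hq.1.trans hp1.symm) (hq.2.trans hp2.symm)
          simp [Complex.exp_log (hf q)]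
        · exact ⟨0, fun q hq => absurd ⟨q, hq⟩ hp⟩
      obtain ⟨ε, hε, h2, hh2⟩ := sol_expOn_thick f g₂ hB y₀ h0
      refine ⟨ε, hε, fun y y' hy hy' hyy ⟨h1, hh1⟩ => ?_⟩
      rw [abs_lt] at hy hy'
      have h2' : ∀ p, g₁ p = x → y ≤ g₂ p → g₂ p ≤ y' → f p = Complex.exp (h2 p) :=
        fun p a b c => hh2 p ⟨a, abs_le.2 ⟨by linarith, by linarith⟩⟩
      obtain ⟨c, hc1, hc⟩ : ∃ c : ℂ, Complex.exp c = 1 ∧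
          ∀ p ∈ {p | g₁ p = x}, g₂ p = y → h1 p = h2 p + c := by
        by_cases hp : ∃ p, g₁ p = x ∧ g₂ p = y
        · obtain ⟨p, hp1, hp2⟩ := hp
          refine ⟨h1 p - h2 p, ?_, fun q hq hq' => ?_⟩
          · rw [Complex.exp_sub, ← hh1 p ⟨hp1, hp2.le⟩, ← h2' p hp1 hp2.ge (hp2.le.trans hyy),
              div_self (hf p)]
          · obtain rfl : q = p := hinj q p (Eq.trans hq hp1.symm) (hq'.trans hp2.symm)
            ring
        · exact ⟨0, by simp, fun q hq hq' => absurd ⟨q, hq, hq'⟩ hp⟩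
      obtain ⟨H, H1, H2⟩ := sol_glue h1 (h2 + ContinuousMap.const X c) g₂ hB y hc
      refine ⟨H, fun p hp => ?_⟩
      rcases le_total (g₂ p) y with h | h
      · rw [H1 p hp.1 h, hh1 p ⟨hp.1, h⟩]
      · rw [H2 p hp.1 h, h2' p hp.1 h hp.2]
        simp [Complex.exp_add, hc1]
  obtain ⟨h, hh⟩ := key
  exact ⟨h, fun p hp => hh p ⟨hp, (abs_lt.1 (hR p)).2.le⟩⟩

/-- The function `z - a` as a map to `ℂˣ`. -/
noncomputable def solZeta (i : C(X, ℂ)) (a : {a : ℂ // a ∉ Set.range i}) : C(X, ℂˣ) where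
  toFun p := Units.mk0 (i p - a) (sub_ne_zero.2 fun h => a.2 ⟨p, h⟩)
  continuous_toFun := by
    rw [Units.isEmbedding_val₀.continuous_iff]
    exact i.continuous.sub continuous_const

@[simp] lemma solZeta_apply (i : C(X, ℂ)) (a : {a : ℂ // a ∉ Set.range i}) (p : X) :
    ((solZeta i a p : ℂˣ) : ℂ) = i p - a := rfl

lemma sol_branch (i : C(X, ℂ)) (a : {a : ℂ // a ∉ Set.range i}) :
    ∃ l₁ l₂ : C(X, ℂ), (∀ p, (i p).re ≤ a.1.re → i p - a = Complex.exp (l₁ p)) ∧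
      (∀ p, a.1.re ≤ (i p).re → i p - a = Complex.exp (l₂ p)) ∧
      (∀ p, (i p).re = a.1.re → (i p).im < a.1.im → l₂ p - l₁ p = 0) ∧
      (∀ p, (i p).re = a.1.re → a.1.im < (i p).im →
        l₂ p - l₁ p = 2 * Real.pi * Complex.I) := by
  have hne : ∀ p, i p - a ≠ 0 := fun p => sub_ne_zero.2 fun h => a.2 ⟨p, h⟩
  have hsl : ∀ z : ℂ, z ≠ 0 → 0 ≤ z.re → z ∈ Complex.slitPlane := by
    intro z hz h
    rw [Complex.mem_slitPlane_iff]
    by_contra! hc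
    exact hz (Complex.ext (le_antisymm hc.1 h) hc.2)
  have hs1 : ∀ p, (i p).re ≤ a.1.re → -(i p - a) ∈ Complex.slitPlane :=
    fun p hp => hsl _ (neg_ne_zero.2 (hne p)) (by simpa using hp)
  have hs2 : ∀ p, a.1.re ≤ (i p).re → (i p - a) ∈ Complex.slitPlane :=
    fun p hp => hsl _ (hne p) (by simpa using hp)
  have c1 : IsClosed {p | (i p).re ≤ a.1.re} := isClosed_le (by fun_prop) continuous_const
  have c2 : IsClosed {p | a.1.re ≤ (i p).re} := isClosed_le continuous_const (by fun_prop)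
  obtain ⟨l₁, hl₁⟩ := sol_tietze c1 (h := fun p => Complex.log (-(i p - a)) - Real.pi * Complex.I)
    ((ContinuousOn.clog (by fun_prop) hs1).sub continuousOn_const)
  obtain ⟨l₂, hl₂⟩ := sol_tietze c2 (h := fun p => Complex.log (i p - a))
    (ContinuousOn.clog (by fun_prop) hs2)
  refine ⟨l₁, l₂, fun p hp => ?_, fun p hp => ?_, fun p hp hq => ?_, fun p hp hq => ?_⟩
  · rw [hl₁ p hp, Complex.exp_sub, Complex.exp_log (neg_ne_zero.2 (hne p)), Complex.exp_pi_mul_I]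
    ring
  · rw [hl₂ p hp, Complex.exp_log (hne p)]
  · rw [hl₁ p hp.le, hl₂ p hp.ge]
    have e : Complex.arg (i p - a) = Complex.arg (-(i p - a)) - Real.pi := by
      rw [Complex.arg_neg_eq_arg_add_pi_of_im_neg (by simpa using hq)]; ring
    rw [Complex.log, Complex.log, e, norm_neg]
    push_cast
    ring
  · rw [hl₁ p hp.le, hl₂ p hp.ge]
    have e : Complex.arg (i p - a) = Complex.arg (-(i p - a)) + Real.pi := by
      rw [Complex.arg_neg_eq_arg_sub_pi_of_im_pos (by simpa using hq)]; ring
    rw [Complex.log, Complex.log, e, norm_neg]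
    push_cast
    ring

lemma sol_jump (i : C(X, ℂ)) (hi : Function.Injective i) (x : ℝ) (d : C(X, ℂ))
    (hd : ∀ p, (i p).re = x → Complex.exp (d p) = 1) :
    ∃ r ∈ Subgroup.closure (solZeta i '' {a | a.1.re = x}), ∃ u₁ u₂ : C(X, ℂ),
      (∀ p, (i p).re ≤ x → (r p : ℂ) = Complex.exp (u₁ p)) ∧
      (∀ p, x ≤ (i p).re → (r p : ℂ) = Complex.exp (u₂ p)) ∧
      (∀ p, (i p).re = x → u₂ p - u₁ p = d p) := by
  set g : C(X, ℝ) := ⟨fun p => (i p).im, by fun_prop⟩ with hg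
  have hB : IsClosed {p | (i p).re = x} := isClosed_eq (by fun_prop) continuous_const
  obtain ⟨R, hR0, hR⟩ := sol_bdd g
  let P : ℝ → Prop := fun y =>
    ∃ r ∈ Subgroup.closure (solZeta i '' {a | a.1.re = x}), ∃ u₁ u₂ : C(X, ℂ),
      (∀ p, (i p).re ≤ x → (r p : ℂ) = Complex.exp (u₁ p)) ∧
      (∀ p, x ≤ (i p).re → (r p : ℂ) = Complex.exp (u₂ p)) ∧
      (∀ p, (i p).re = x → g p ≤ y → u₂ p - u₁ p = d p) ∧
      ∃ c : ℤ, ∀ p, (i p).re = x → y ≤ g p → u₂ p - u₁ p = c * (2 * Real.pi * Complex.I)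
  have key : P R := by
    refine sol_interval_induction (a := -R) (by linarith) ?_ (fun y₀ => ?_)
    · exact ⟨1, one_mem _, 0, 0, by simp, by simp,
        fun p _ hp => absurd hp (not_le.2 (abs_lt.1 (hR p)).1), 0, by simp⟩
    · obtain ⟨k, hk⟩ : ∃ k : ℤ, ∀ p, (i p).re = x → g p = y₀ →
          d p = k * (2 * Real.pi * Complex.I) := by
        by_cases hp : ∃ p, (i p).re = x ∧ g p = y₀
        · obtain ⟨p, hp1, hp2⟩ := hp
          obtain ⟨k, hk⟩ := Complex.exp_eq_one_iff.1 (hd p hp1)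
          refine ⟨k, fun q hq hq' => ?_⟩
          obtain rfl : q = p := hi (Complex.ext (hq.trans hp1.symm) (hq'.trans hp2.symm))
          exact hk
        · exact ⟨0, fun q hq hq' => (hp ⟨q, hq, hq'⟩).elim⟩
      obtain ⟨ε, hε, hU⟩ := sol_thick g hB
        (U := {p | ‖d p - k * (2 * Real.pi * Complex.I)‖ < 1})
        (isOpen_lt (by fun_prop) continuous_const) y₀
        (fun p hp hp' => by simp [hk p hp hp'])
      have hd' : ∀ p, (i p).re = x → |g p - y₀| < ε → d p = k * (2 * Real.pi * Complex.I) := by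
        intro p hp hp'
        have h1 : ‖d p - k * (2 * Real.pi * Complex.I)‖ < 1 := hU p hp hp'
        obtain ⟨m, hm⟩ := Complex.exp_eq_one_iff.1 (hd p hp)
        rw [hm, ← sub_mul, norm_mul] at h1
        have h2 : ‖(2 * Real.pi * Complex.I : ℂ)‖ = 2 * Real.pi := by
          simp [abs_of_pos Real.pi_pos]
        rw [h2] at h1
        have h3 : ‖((m - k : ℤ) : ℂ)‖ < 1 := by
          push_cast
          by_contra! h4
          nlinarith [Real.pi_gt_three]
        rw [Complex.norm_intCast] at h3
        have h4 : m - k = 0 := by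
          rw [← Int.abs_lt_one_iff]; exact_mod_cast h3
        rw [hm, show m = k by omega]
      refine ⟨ε, hε, fun y y' hy hy' hyy => ?_⟩
      rintro ⟨r, hr, u₁, u₂, h1, h2, h3, c, h4⟩
      rw [abs_lt] at hy hy'
      have hd2 : ∀ p, (i p).re = x → y ≤ g p → g p ≤ y' →
          d p = k * (2 * Real.pi * Complex.I) :=
        fun p hp a b => hd' p hp (abs_lt.2 ⟨by linarith, by linarith⟩)
      by_cases hxy : ∃ p, i p = ⟨x, y⟩
      · obtain ⟨p, hp⟩ := hxy
        have hpx : (i p).re = x := by rw [hp]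
        have hpy : g p = y := by simp [hg, hp]
        refine ⟨r, hr, u₁, u₂, h1, h2, fun q hq hq' => ?_, c,
          fun q hq hq' => h4 q hq (hyy.trans hq')⟩
        rcases le_total (g q) y with h | h
        · exact h3 q hq h
        · rw [h4 q hq h, hd2 q hq h hq', ← h4 p hpx hpy.ge, h3 p hpx hpy.le,
            hd2 p hpx hpy.ge (hpy.le.trans hyy)]
      · let a : {a : ℂ // a ∉ Set.range i} := ⟨⟨x, y⟩, hxy⟩
        obtain ⟨l₁, l₂, e1, e2, e3, e4⟩ := sol_branch i a
        have ha : a ∈ {a : {a : ℂ // a ∉ Set.range i} | a.1.re = x} := rfl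
        have hm0 : solZeta i a ∈ Subgroup.closure (solZeta i '' {a | a.1.re = x}) :=
          Subgroup.subset_closure ⟨a, ha, rfl⟩
        have hmem : r * solZeta i a ^ (k - c) ∈
            Subgroup.closure (solZeta i '' {a | a.1.re = x}) := mul_mem hr (zpow_mem hm0 _)
        refine ⟨r * solZeta i a ^ (k - c),
          hmem,
          u₁ + (k - c) • l₁, u₂ + (k - c) • l₂, fun p hp => ?_, fun p hp => ?_,
          fun p hp hpy => ?_, k, fun p hp hpy => ?_⟩
        · simp only [ContinuousMap.mul_apply, ContinuousMap.zpow_apply, Units.val_mul,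
            Units.val_zpow_eq_zpow_val, solZeta_apply, ContinuousMap.add_apply,
            ContinuousMap.smul_apply, Complex.exp_add]
          rw [h1 p hp, e1 p hp, zsmul_eq_mul, Complex.exp_int_mul]
        · simp only [ContinuousMap.mul_apply, ContinuousMap.zpow_apply, Units.val_mul,
            Units.val_zpow_eq_zpow_val, solZeta_apply, ContinuousMap.add_apply,
            ContinuousMap.smul_apply, Complex.exp_add]
          rw [h2 p hp, e2 p hp, zsmul_eq_mul, Complex.exp_int_mul]
        · have hney : g p ≠ y := fun h => hxy ⟨p, Complex.ext hp h⟩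
          have : (u₂ + (k - c) • l₂) p - (u₁ + (k - c) • l₁) p
            = (u₂ p - u₁ p) + (k - c : ℤ) * (l₂ p - l₁ p) := by
            simp; ring
          rw [this]
          rcases lt_or_gt_of_ne hney with h | h
          · rw [e3 p hp h, h3 p hp h.le]; simp
          · rw [e4 p hp h, h4 p hp h.le, hd2 p hp h.le hpy]
            push_cast; ring
        · have hney : g p ≠ y := fun h => hxy ⟨p, Complex.ext hp h⟩
          have : (u₂ + (k - c) • l₂) p - (u₁ + (k - c) • l₁) p
            = (u₂ p - u₁ p) + (k - c : ℤ) * (l₂ p - l₁ p) := by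
            simp; ring
          have h : y < g p := lt_of_le_of_ne (hyy.trans hpy) hney.symm
          rw [this, e4 p hp h, h4 p hp h.le]
          push_cast; ring
  obtain ⟨r, hr, u₁, u₂, h1, h2, h3, -⟩ := key
  exact ⟨r, hr, u₁, u₂, h1, h2, fun p hp => h3 p hp (abs_lt.1 (hR p)).2.le⟩

lemma sol_right (i : C(X, ℂ)) (x : ℝ) (r : C(X, ℂˣ))
    (hr : r ∈ Subgroup.closure (solZeta i '' {a | a.1.re < x})) :
    ∃ h : C(X, ℂ), ∀ p, x ≤ (i p).re → (r p : ℂ) = Complex.exp (h p) := by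
  induction hr using Subgroup.closure_induction with
  | mem s hs =>
    obtain ⟨a, ha, rfl⟩ := hs
    obtain ⟨l₁, l₂, e1, e2, e3, e4⟩ := sol_branch i a
    exact ⟨l₂, fun p hp => e2 p (le_trans (le_of_lt ha) hp)⟩
  | one => exact ⟨0, by simp⟩
  | mul s t _ _ hs ht =>
    obtain ⟨h1, e1⟩ := hs
    obtain ⟨h2, e2⟩ := ht
    exact ⟨h1 + h2, fun p hp => by simp [e1 p hp, e2 p hp, Complex.exp_add]⟩
  | inv s _ hs =>
    obtain ⟨h1, e1⟩ := hs
    exact ⟨-h1, fun p hp => by simp [e1 p hp, Complex.exp_neg]⟩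

theorem sol_eilenberg (i : C(X, ℂ)) (hi : Function.Injective i) (f : C(X, ℂˣ)) :
    ∃ r ∈ Subgroup.closure (Set.range (solZeta i)), ∃ h : C(X, ℂ),
      ∀ p, (f p : ℂ) = r p * Complex.exp (h p) := by
  set g : C(X, ℝ) := ⟨fun p => (i p).re, by fun_prop⟩ with hg
  set g' : C(X, ℝ) := ⟨fun p => (i p).im, by fun_prop⟩ with hg'
  set F : C(X, ℂ) := ⟨fun p => (f p : ℂ), Units.continuous_val.comp f.continuous⟩ with hF
  obtain ⟨R, hR0, hR⟩ := sol_bdd g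
  let P : ℝ → Prop := fun x => ∃ r ∈ Subgroup.closure (solZeta i '' {a | a.1.re < x}),
    ∃ h : C(X, ℂ), ∀ p, (i p).re ≤ x → (f p : ℂ) = r p * Complex.exp (h p)
  have key : P R := by
    refine sol_interval_induction (a := -R) (by linarith) ?_ (fun x₀ => ?_)
    · exact ⟨1, one_mem _, 0, fun p hp => absurd hp (not_le.2 (abs_lt.1 (hR p)).1)⟩
    · obtain ⟨h2, hh2⟩ := sol_line F (fun p => (f p).ne_zero) g g'
        (fun p q h h' => hi (Complex.ext h h')) x₀
      obtain ⟨ε, hε, h2, hh2⟩ := sol_expOn_thick F g isClosed_univ x₀ ⟨h2, fun p hp => hh2 p hp.2⟩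
      refine ⟨ε, hε, fun x x' hx hx' hxx => ?_⟩
      rintro ⟨r, hr, h1, hh1⟩
      rw [abs_lt] at hx hx'
      rcases hxx.eq_or_lt with rfl | hlt
      · exact ⟨r, hr, h1, hh1⟩
      obtain ⟨h3, hh3⟩ := sol_right i x r hr
      have h2' : ∀ p, x ≤ g p → g p ≤ x' → (f p : ℂ) = Complex.exp (h2 p) :=
        fun p b c => hh2 p ⟨trivial, abs_le.2 ⟨by linarith, by linarith⟩⟩
      obtain ⟨s, hs, u₁, u₂, k1, k2, k3⟩ := sol_jump i hi x (h2 - h3 - h1) (by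
        intro p hp
        have e1 := hh1 p hp.le
        rw [h2' p hp.ge (hp.le.trans hxx), hh3 p hp.ge] at e1
        simp only [ContinuousMap.sub_apply, Complex.exp_sub]
        rw [e1]
        field_simp [Complex.exp_ne_zero])
      obtain ⟨H, H1, H2⟩ := sol_glue (h1 - u₁) (h2 - h3 - u₂) g isClosed_univ x (by
        intro p _ hp
        have := k3 p hp
        simp only [ContinuousMap.sub_apply] at this ⊢
        linear_combination this)
      refine ⟨r * s, mul_mem ?_ ?_, H, fun p hp => ?_⟩
      · refine Subgroup.closure_mono (Set.image_mono ?_) hr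
        intro a ha
        exact lt_trans (Set.mem_ofPred.1 ha) hlt
      · refine Subgroup.closure_mono (Set.image_mono ?_) hs
        intro a ha
        exact lt_of_eq_of_lt (Set.mem_ofPred.1 ha) hlt
      · rcases le_total (g p) x with h | h
        · rw [H1 p trivial h, hh1 p h]
          simp only [ContinuousMap.mul_apply, Units.val_mul, k1 p h, ContinuousMap.sub_apply,
            Complex.exp_sub]
          field_simp [Complex.exp_ne_zero]
        · rw [H2 p trivial h, h2' p h hp]
          simp only [ContinuousMap.mul_apply, Units.val_mul, k2 p h, hh3 p h,
            ContinuousMap.sub_apply, Complex.exp_sub]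
          field_simp [Complex.exp_ne_zero]
  obtain ⟨r, hr, h, hh⟩ := key
  exact ⟨r, Subgroup.closure_mono (Set.image_subset_range _ _) hr, h,
    fun p => hh p (abs_lt.1 (hR p)).2.le⟩

end Eil

section Indep

variable {X : Type*} [TopologicalSpace X] [CompactSpace X] [T2Space X]

lemma sol_exp_one_small {z : ℂ} (hz : Complex.exp z = 1) (h1 : ‖z‖ < 1) : z = 0 := by
  obtain ⟨m, hm⟩ := Complex.exp_eq_one_iff.1 hz
  rw [hm, norm_mul] at h1
  have h2 : ‖(2 * Real.pi * Complex.I : ℂ)‖ = 2 * Real.pi := by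
    simp [abs_of_pos Real.pi_pos]
  rw [h2] at h1
  have h3 : ‖(m : ℂ)‖ < 1 := by
    by_contra! h4
    nlinarith [Real.pi_gt_three]
  rw [Complex.norm_intCast] at h3
  have h4 : m = 0 := by
    rw [← Int.abs_lt_one_iff]; exact_mod_cast h3
  rw [hm, h4]; simp

lemma sol_const (φ : ℝ → ℂ) (hφ : Continuous φ) (h : ∀ t, Complex.exp (φ t) = 1) (t : ℝ) :
    φ t = φ 0 := by
  have hl : IsLocallyConstant φ := by
    rw [IsLocallyConstant.iff_eventually_eq]
    intro x
    have hc : ContinuousAt (fun y => ‖φ y - φ x‖) x := by fun_prop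
    filter_upwards [hc.eventually_lt (g := fun _ => (1 : ℝ)) continuousAt_const (by simp)]
      with y hy
    refine sub_eq_zero.1 (sol_exp_one_small ?_ hy)
    rw [Complex.exp_sub, h, h, div_one]
  exact hl.apply_eq_of_preconnectedSpace _ _

/-- Subgroup of the maps having a logarithm. -/
def solE (X : Type*) [TopologicalSpace X] : Subgroup C(X, ℂˣ) where
  carrier := {f | ∃ h : C(X, ℂ), ∀ p, (f p : ℂ) = Complex.exp (h p)}
  one_mem' := ⟨0, by simp⟩
  mul_mem' := by
    rintro s t ⟨h1, e1⟩ ⟨h2, e2⟩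
    exact ⟨h1 + h2, fun p => by simp [e1 p, e2 p, Complex.exp_add]⟩
  inv_mem' := by
    rintro s ⟨h1, e1⟩
    exact ⟨-h1, fun p => by simp [e1 p, Complex.exp_neg]⟩

lemma mem_solE {f : C(X, ℂˣ)} :
    f ∈ solE X ↔ ∃ h : C(X, ℂ), ∀ p, (f p : ℂ) = Complex.exp (h p) := Iff.rfl

lemma sol_near (i : C(X, ℂ)) (a : {a : ℂ // a ∉ Set.range i}) :
    ∃ ε > 0, ∀ z ∈ Metric.ball (a : ℂ) ε, ∃ hz : z ∉ Set.range i,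
      solZeta i ⟨z, hz⟩ / solZeta i a ∈ solE X := by
  have hcl : IsClosed (Set.range i) := (isCompact_range i.continuous).isClosed
  obtain ⟨ε, hε, hb⟩ := Metric.isOpen_iff.1 hcl.isOpen_compl a.1 a.2
  refine ⟨ε, hε, fun z hz => ⟨hb hz, ?_⟩⟩
  have hne : ∀ p, i p - a ≠ 0 := fun p => sub_ne_zero.2 fun h => a.2 ⟨p, h⟩
  have hsl : ∀ p, 1 + (-((z - a) / (i p - a))) ∈ Complex.slitPlane := by
    intro p
    apply Complex.mem_slitPlane_of_norm_lt_one
    rw [norm_neg, norm_div, div_lt_one (norm_pos_iff.2 (hne p))]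
    rw [Metric.mem_ball, dist_eq_norm] at hz
    refine hz.trans_le ?_
    by_contra! hlt
    exact hb (show i p ∈ Metric.ball (a : ℂ) ε by rwa [Metric.mem_ball, dist_eq_norm]) ⟨p, rfl⟩
  refine ⟨⟨fun p => Complex.log (1 + (-((z - a) / (i p - a)))), ?_⟩, fun p => ?_⟩
  · refine Continuous.clog ?_ hsl
    exact continuous_const.add (continuous_const.div (by fun_prop) hne).neg
  · simp only [ContinuousMap.div_apply, Units.val_div_eq_div_val, solZeta_apply,
      ContinuousMap.coe_mk]
    rw [Complex.exp_log (Complex.slitPlane_ne_zero (hsl p))]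
    have := hne p
    field_simp
    ring

lemma sol_far (i : C(X, ℂ)) :
    ∃ R > 0, ∀ z : ℂ, R ≤ ‖z‖ → ∃ hz : z ∉ Set.range i, solZeta i ⟨z, hz⟩ ∈ solE X := by
  obtain ⟨R, hR0, hR⟩ := sol_bdd (X := X) ⟨fun p => ‖i p‖, by fun_prop⟩
  have hR' : ∀ p, ‖i p‖ < R := fun p => by simpa using hR p
  refine ⟨R, hR0, fun z hz => ⟨?_, ?_⟩⟩
  · rintro ⟨p, rfl⟩
    exact absurd (hR' p) (not_lt.2 hz)
  have hz0 : z ≠ 0 := norm_pos_iff.1 (hR0.trans_le hz)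
  have hsl : ∀ p, 1 + (-(i p / z)) ∈ Complex.slitPlane := by
    intro p
    apply Complex.mem_slitPlane_of_norm_lt_one
    rw [norm_neg, norm_div, div_lt_one (norm_pos_iff.2 hz0)]
    exact (hR' p).trans_le hz
  refine ⟨⟨fun p => Complex.log (-z) + Complex.log (1 + (-(i p / z))), ?_⟩, fun p => ?_⟩
  · exact continuous_const.add (Continuous.clog (by fun_prop) hsl)
  · simp only [solZeta_apply, ContinuousMap.coe_mk]
    rw [Complex.exp_add, Complex.exp_log (Complex.slitPlane_ne_zero (hsl p)),
      Complex.exp_log (neg_ne_zero.2 hz0)]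
    field_simp
    ring

lemma sol_winding (G : ℂ → ℂ) (hG : Continuous G) (hG0 : ∀ z, G z ≠ 0) (a : ℂ) (n : ℤ) (R : ℝ)
    (h : ∀ z, R ≤ ‖z‖ → G z = (z - a) ^ n) : n = 0 := by
  obtain ⟨L, ⟨-, hL⟩, -⟩ := Complex.isCoveringMapOn_exp.existsUnique_continuousMap_lifts
    ⟨G, hG⟩ (a₀ := (0 : ℂ)) (Complex.exp_log (hG0 0)) (fun x => hG0 x)
  have hL' : ∀ z, Complex.exp (L z) = G z := fun z => congrFun hL z
  set ρ : ℝ := |R| + ‖a‖ + 1 with hρ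
  have hρ0 : 0 < ρ := by positivity
  have hexp : ∀ t : ℝ, G (a + ρ * Complex.exp (t * Complex.I)) =
      Complex.exp (n * (Complex.log ρ + t * Complex.I)) := by
    intro t
    rw [h, Complex.exp_int_mul, Complex.exp_add, Complex.exp_log (by exact_mod_cast hρ0.ne')]
    · simp
    · have h1 : ‖(ρ * Complex.exp (t * Complex.I) : ℂ)‖ = ρ := by
        rw [norm_mul, Complex.norm_exp_ofReal_mul_I, mul_one, Complex.norm_real, Real.norm_eq_abs,
          abs_of_pos hρ0]
      have h2 := norm_sub_le (a + ρ * Complex.exp (t * Complex.I)) a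
      rw [add_sub_cancel_left, h1] at h2
      linarith [le_abs_self R]
  have hc := sol_const (fun t => L (a + ρ * Complex.exp (t * Complex.I)) -
      n * (Complex.log ρ + t * Complex.I)) (by fun_prop) (fun t => by
        rw [Complex.exp_sub, hL', hexp, div_self (Complex.exp_ne_zero _)]) (2 * Real.pi)
  push_cast at hc
  rw [Complex.exp_two_pi_mul_I] at hc
  simp only [zero_mul, Complex.exp_zero] at hc
  have h3 : (n : ℂ) * (2 * Real.pi * Complex.I) = 0 := by linear_combination -hc
  have h4 : (n : ℂ) = 0 := (mul_eq_zero.1 h3).resolve_right Complex.two_pi_I_ne_zero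
  exact_mod_cast h4

lemma sol_indep (i : C(X, ℂ)) (hi : Function.Injective i) {J : Type*} [DecidableEq J]
    (s : Finset J)
    (c : J → {a : ℂ // a ∉ Set.range i}) (n : J → ℤ) (j : J) (hj : j ∈ s)
    (hne : ∀ k ∈ s, k ≠ j → solZeta i (c k) / solZeta i (c j) ∉ solE X)
    (hnt : solZeta i (c j) ∉ solE X)
    (hprod : ∏ k ∈ s, solZeta i (c k) ^ n k ∈ solE X) : n j = 0 := by
  classical
  obtain ⟨h, hh⟩ := hprod
  have hemb : Topology.IsClosedEmbedding i := i.continuous.isClosedEmbedding hi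
  obtain ⟨H, hH⟩ := ContinuousMap.exists_extension hemb h
  have hH' : ∀ p, H (i p) = h p := fun p => congrArg (fun k => k p) hH
  obtain ⟨R, hR0, hR⟩ := sol_far i
  set V : Set ℂ := {z | ∃ hz : z ∉ Set.range i, solZeta i ⟨z, hz⟩ / solZeta i (c j) ∈ solE X}
    with hV
  have hloc : ∀ z, z ∉ Set.range i → ∃ ε > 0, ∀ y ∈ Metric.ball z ε, (y ∈ V ↔ z ∈ V) := by
    intro z hz
    obtain ⟨ε, hε, hb⟩ := sol_near i ⟨z, hz⟩
    refine ⟨ε, hε, fun y hy => ?_⟩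
    obtain ⟨hy', he⟩ := hb y hy
    constructor
    · rintro ⟨_, h1⟩
      refine ⟨hz, ?_⟩
      have := div_mem h1 he
      rwa [div_div_div_cancel_left] at this
    · rintro ⟨_, h1⟩
      refine ⟨hy', ?_⟩
      have := mul_mem he h1
      rwa [div_mul_div_cancel] at this
  have hVK : ∀ z ∈ V, z ∉ Set.range i := fun z hz => hz.1
  have hfr : ∀ z ∈ frontier V, z ∈ Set.range i := by
    intro z hz
    by_contra hzK
    obtain ⟨ε, hε, hb⟩ := hloc z hzK
    have hz1 : z ∈ closure V := hz.1
    obtain ⟨y, hyV, hyb⟩ := Metric.mem_closure_iff.1 hz1 ε hε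
    have hzV : z ∈ V := (hb y (by rwa [Metric.mem_ball, dist_comm])).1 hyV
    exact hz.2 (mem_interior_iff_mem_nhds.2
      (Filter.mem_of_superset (Metric.ball_mem_nhds z hε) fun y hy => (hb y hy).2 hzV))
  have hcj : (c j : ℂ) ∈ V := ⟨(c j).2, by simp [one_mem]⟩
  have hck : ∀ k ∈ s, k ≠ j → (c k : ℂ) ∉ V := fun k hk hkj ⟨_, h1⟩ => hne k hk hkj h1
  have hVb : ∀ z, R ≤ ‖z‖ → z ∉ V := by
    rintro z hz ⟨hz1, hz2⟩
    obtain ⟨_, h2⟩ := hR z hz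
    have := div_mem h2 hz2
    rw [div_div_cancel] at this
    exact hnt this
  set A : ℂ → ℂ := fun z => Complex.exp (H z) * ∏ k ∈ s.erase j, (z - c k) ^ (-n k) with hA
  set B : ℂ → ℂ := fun z => (z - c j) ^ n j with hBdef
  have hagree : ∀ p, A (i p) = B (i p) := by
    intro p
    have h1 := hh p
    have h2 : ((∏ k ∈ s, solZeta i (c k) ^ n k : C(X, ℂˣ)) p : ℂ)
        = ∏ k ∈ s, (i p - c k) ^ n k := by
      simp [ContinuousMap.prod_apply]
    rw [h2, ← Finset.mul_prod_erase s _ hj] at h1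
    simp only [hA, hBdef]
    rw [hH', ← h1, mul_assoc, ← Finset.prod_mul_distrib]
    rw [Finset.prod_eq_one, mul_one]
    intro k _
    rw [← zpow_add₀ (sub_ne_zero.2 fun h => (c k).2 ⟨p, h⟩)]
    simp
  have hclV : closure V ⊆ V ∪ Set.range i := by
    intro z hz
    by_cases hzV : z ∈ V
    · exact Or.inl hzV
    · exact Or.inr (hfr z ⟨hz, fun h => hzV (interior_subset h)⟩)
  have hclVc : ∀ z ∈ closure Vᶜ, z ∉ V := by
    intro z hz hzV
    obtain ⟨ε, hε, hb⟩ := hloc z (hVK z hzV)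
    obtain ⟨y, hyV, hyb⟩ := Metric.mem_closure_iff.1 hz ε hε
    exact hyV ((hb y (by rwa [Metric.mem_ball, dist_comm])).2 hzV)
  have hAne : ∀ k ∈ s.erase j, ∀ z ∈ V ∪ Set.range i, z - c k ≠ 0 := by
    intro k hk z hz h0
    rw [Finset.mem_erase] at hk
    rw [sub_eq_zero] at h0
    rcases hz with hz | hz
    · exact hck k hk.2 hk.1 (h0 ▸ hz)
    · exact (c k).2 (h0 ▸ hz)
  have hAc : ContinuousOn A (closure V) := by
    refine ContinuousOn.mul (by fun_prop) (continuousOn_finsetProd _ fun k hk => ?_)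
    exact ContinuousOn.zpow₀ (by fun_prop) _ fun z hz => Or.inl (hAne k hk z (hclV hz))
  have hBc : ContinuousOn B (closure Vᶜ) := by
    refine ContinuousOn.zpow₀ (by fun_prop) _ fun z hz => Or.inl ?_
    intro h0
    rw [sub_eq_zero] at h0
    exact hclVc z hz (h0 ▸ hcj)
  have hGc : Continuous (V.piecewise A B) := by
    refine continuous_piecewise (fun z hz => ?_) hAc hBc
    obtain ⟨p, rfl⟩ := hfr z hz
    exact hagree p
  refine sol_winding (V.piecewise A B) hGc (fun z => ?_) (c j) (n j) R (fun z hz => ?_)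
  · by_cases hz : z ∈ V
    · rw [Set.piecewise_eq_of_mem _ _ _ hz]
      exact mul_ne_zero (Complex.exp_ne_zero _)
        (Finset.prod_ne_zero_iff.2 fun k hk => zpow_ne_zero _ (hAne k hk z (Or.inl hz)))
    · rw [Set.piecewise_eq_of_notMem _ _ _ hz]
      exact zpow_ne_zero _ fun h0 => hz ((sub_eq_zero.1 h0) ▸ hcj)
  · rw [Set.piecewise_eq_of_notMem _ _ _ (hVb z hz)]

theorem sol_algebra {M : Type*} [CommGroup M] (E : Subgroup M) {A : Type*} (ζ : A → M)
    (hgen : ∀ f, ∃ r ∈ Subgroup.closure (Set.range ζ), f / r ∈ E)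
    (hind : ∀ {J : Set (Additive (M ⧸ E))} (s : Finset J) (c : J → A) (n : J → ℤ) (j : J),
      j ∈ s → (∀ k ∈ s, k ≠ j → ζ (c k) / ζ (c j) ∉ E) → ζ (c j) ∉ E →
      ∏ k ∈ s, ζ (c k) ^ n k ∈ E → n j = 0) (f : M)
    (hf : ∀ N : ℕ, ∃ m : ℕ, N ≤ m ∧ ∃ g : M, f = g ^ m) : f ∈ E := by
  classical
  let q : M → Additive (M ⧸ E) := fun f => Additive.ofMul (QuotientGroup.mk f)
  have q0 : ∀ f, q f = 0 ↔ f ∈ E := fun f => QuotientGroup.eq_one_iff f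
  have qmul : ∀ f g, q (f * g) = q f + q g := fun _ _ => rfl
  have qdiv : ∀ f g, q (f / g) = q f - q g := fun _ _ => rfl
  have qinv : ∀ f, q (f⁻¹) = - q f := fun _ => rfl
  have qone : q 1 = 0 := rfl
  have qpow : ∀ f (m : ℕ), q (f ^ m) = m • q f := fun _ _ => rfl
  have qzpow : ∀ f (m : ℤ), q (f ^ m) = m • q f := fun _ _ => rfl
  have qprod : ∀ {J : Type _} (s : Finset J) (F : J → M),
      q (∏ k ∈ s, F k) = ∑ k ∈ s, q (F k) := by
    intro J s F
    induction s using Finset.induction_on with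
    | empty => simpa using qone
    | insert a s ha ih => rw [Finset.prod_insert ha, Finset.sum_insert ha, qmul, ih]
  let S : Set (Additive (M ⧸ E)) := Set.range (fun a => q (ζ a)) \ {0}
  have hS : ∀ x : S, ∃ a, q (ζ a) = x := fun x => x.2.1
  choose c hc using hS
  have hli : LinearIndependent ℤ (Subtype.val : S → Additive (M ⧸ E)) := by
    rw [linearIndependent_iff']
    intro s g hg j hj
    refine hind s c g j hj (fun k hk hkj hmem => hkj ?_) (fun hmem => ?_) ?_
    · rw [← q0, qdiv, hc, hc, sub_eq_zero] at hmem
      exact Subtype.ext hmem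
    · rw [← q0, hc] at hmem
      exact j.2.2 hmem
    · rw [← q0, qprod]
      simpa only [qzpow, hc] using hg
  have hcl : ∀ r ∈ Subgroup.closure (Set.range ζ), q r ∈ Submodule.span ℤ S := by
    intro r hr
    induction hr using Subgroup.closure_induction with
    | mem s hs =>
      obtain ⟨a, rfl⟩ := hs
      by_cases h0 : q (ζ a) = 0
      · rw [h0]; exact zero_mem _
      · exact Submodule.subset_span ⟨⟨a, rfl⟩, h0⟩
    | one => rw [qone]; exact zero_mem _
    | mul s t _ _ hs ht => rw [qmul]; exact add_mem hs ht
    | inv s _ hs => rw [qinv]; exact neg_mem hs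
  have hspan : ⊤ ≤ Submodule.span ℤ (Set.range (Subtype.val : S → _)) := by
    rw [Subtype.range_coe]
    rintro x -
    obtain ⟨f, rfl⟩ : ∃ f, q f = x := QuotientGroup.mk_surjective (Additive.toMul x)
    obtain ⟨r, hr, hfr⟩ := hgen f
    have : q f = q r := by
      rw [← sub_eq_zero, ← qdiv, q0]
      exact hfr
    rw [this]
    exact hcl r hr
  let b := Module.Basis.mk hli hspan
  rw [← q0]
  apply b.repr.injective
  rw [map_zero]
  ext x
  obtain ⟨m, hm, g, hg⟩ := hf ((b.repr (q f) x).natAbs + 1)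
  have h1 : b.repr (q f) x = m * b.repr (q g) x := by
    conv_lhs => rw [hg, qpow]
    simp
  have h2 : (m : ℤ) ∣ b.repr (q f) x := ⟨_, h1⟩
  have h3 := Int.eq_zero_of_abs_lt_dvd h2 (by rw [Int.abs_eq_natAbs]; omega)
  simpa using h3

theorem sol_not_divisible (i : C(X, ℂ)) (hi : Function.Injective i) (f : C(X, ℂˣ))
    (hf : ∀ N : ℕ, ∃ m : ℕ, N ≤ m ∧ ∃ g : C(X, ℂˣ), f = g ^ m) : f ∈ solE X := by
  classical
  refine sol_algebra (solE X) (solZeta i) (fun f => ?_)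
    (fun s c n j hj h1 h2 h3 => sol_indep i hi s c n j hj h1 h2 h3) f hf
  obtain ⟨r, hr, h, hh⟩ := sol_eilenberg i hi f
  refine ⟨r, hr, h, fun p => ?_⟩
  simp [hh p]

end Indep

lemma sol_compact (w : ℕ → ℕ) : CompactSpace (Solenoid w) := by
  refine (isCompact_iff_compactSpace
    (s := ((solenoidSubgroup w : Subgroup (ℕ → Circle)) : Set (ℕ → Circle)))).1 ?_
  apply IsClosed.isCompact
  have : ((solenoidSubgroup w : Subgroup (ℕ → Circle)) : Set (ℕ → Circle)) =
      ⋂ n, {x | x n = x (n + 1) ^ w n} := by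
    ext x
    simp only [Set.mem_iInter]
    rfl
  rw [this]
  exact isClosed_iInter fun n => isClosed_eq (by fun_prop) (by fun_prop)

/-- The coordinate functions of the solenoid. -/
noncomputable def solCoord (w : ℕ → ℕ) (n : ℕ) : C(Solenoid w, ℂˣ) where
  toFun p := Circle.toUnits (p.1 n)
  continuous_toFun := by
    rw [Units.isEmbedding_val₀.continuous_iff]
    exact continuous_subtype_val.comp ((continuous_apply n).comp continuous_subtype_val)

lemma solCoord_zero (w : ℕ → ℕ) (n : ℕ) :
    solCoord w 0 = solCoord w n ^ (∏ k ∈ Finset.range n, w k) := by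
  induction n with
  | zero => simp
  | succ n ih =>
    rw [ih, Finset.prod_range_succ, mul_comm, pow_mul]
    congr 1
    ext p
    have := p.2 n
    simp only [solCoord, ContinuousMap.pow_apply, ContinuousMap.coe_mk, ← map_pow]
    rw [← this]

lemma solCoord_not_mem (w : ℕ → ℕ) (hw : ∀ n, 1 < w n) : solCoord w 0 ∉ solE (Solenoid w) := by
  rintro ⟨h, hh⟩
  have := sol_compact w
  let W : ℕ → ℕ := fun n => ∏ k ∈ Finset.range n, w k
  have hW : ∀ n, (W n : ℝ) ≠ 0 := fun n => by
    exact_mod_cast Finset.prod_ne_zero_iff.2 fun k _ => by have := hw k; omega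
  let γ : ℝ → Solenoid w := fun t => ⟨fun n => Circle.exp (t / W n), by
    intro n
    rw [← Circle.exp_nsmul]
    have h1 := hW n
    have h2 : (w n : ℝ) ≠ 0 := by have := hw n; exact_mod_cast (by omega : w n ≠ 0)
    have h3 : (W (n + 1) : ℝ) = W n * w n := by
      simp only [W, Finset.prod_range_succ]; push_cast; rfl
    rw [h3, nsmul_eq_mul]
    field_simp⟩
  have hγ : Continuous γ := by
    refine Continuous.subtype_mk ?_ _
    fun_prop
  have hγ0 : ∀ t : ℝ, Complex.exp (h (γ t)) = Complex.exp (t * Complex.I) := by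
    intro t
    rw [← hh]
    simp [solCoord, γ, W]
  have hc := sol_const (fun t => h (γ t) - t * Complex.I) (by fun_prop) (fun t => by
    rw [Complex.exp_sub, hγ0, div_self (Complex.exp_ne_zero _)])
  obtain ⟨R, hR0, hR⟩ := sol_bdd (X := Solenoid w) ⟨fun p => ‖h p‖, by fun_prop⟩
  have hR' : ∀ p, ‖h p‖ < R := fun p => by simpa using hR p
  have h1 := hc (2 * R)
  simp only [Complex.ofReal_zero, zero_mul, sub_zero] at h1
  have h2 : ((2 * R : ℝ) : ℂ) * Complex.I = h (γ (2 * R)) - h (γ 0) := by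
    linear_combination -h1
  have h3 := congrArg norm h2
  rw [norm_mul, Complex.norm_I, mul_one, Complex.norm_real, Real.norm_eq_abs,
    abs_of_pos (by linarith)] at h3
  have h4 := norm_sub_le (h (γ (2 * R))) (h (γ 0))
  linarith [hR' (γ (2 * R)), hR' (γ 0)]

/-- **No solenoid is planar**: no solenoid embeds into the plane ℝ². -/
theorem no_embedding_of_solenoid_into_plane
    (w : ℕ → ℕ) (hw : ∀ n, 1 < w n) :
    ¬ ∃ f : Solenoid w → EuclideanSpace ℝ (Fin 2), IsEmbedding f := by
  rintro ⟨f, hf⟩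
  have := sol_compact w
  let e := Complex.orthonormalBasisOneI.repr.symm
  let i : C(Solenoid w, ℂ) := ⟨fun p => e (f p), e.continuous.comp hf.continuous⟩
  have hi : Function.Injective i := e.injective.comp hf.injective
  refine solCoord_not_mem w hw (sol_not_divisible i hi _ fun N => ?_)
  refine ⟨∏ k ∈ Finset.range N, w k, ?_, solCoord w N, solCoord_zero w N⟩
  have h2 : 2 ^ N ≤ ∏ k ∈ Finset.range N, w k := by
    have := Finset.prod_le_prod' (s := Finset.range N) (f := fun _ => 2) (g := w)
      (fun k _ => hw k)
    simpa using this
  exact (Nat.lt_two_pow_self).le.trans h2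
end
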